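/- arXiv:2108.09103 — 6 statements merged into one kernel-verified Lean document; each statement's English description precedes it below -/
import Mathlib

section
/- Let μ_1, …, μ_M be vectors in a real inner-product space, and on a probability space let X_1, …, X_M be random vectors with E[X_m] = μ_m and E‖X_m − μ_m‖² ≤ σ², and let B_1, …, B_M be {0,1}-valued Bernoulli variables with P(B_m = 1) = p, such that the pairs (X_m, B_m) are mutually independent across m and each B_m is independent of X_m. Let α_1, …, α_M ∈ [0,1] with Σ_m α_m = 1. Then E‖Σ_{m=1}^{M} α_m B_m X_m‖² ≤ p σ² Σ_{m=1}^{M} α_m² + Σ_{m=1}^{M} α_m · p·(p + α_m (1 − p)) · ‖μ_m‖². -/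
open MeasureTheory ProbabilityTheory

/-- For independent pairs `(X_m, B_m)` with `E X_m = μs m`,
variance at most `σ²`, `B_m` Bernoulli(p) independent of `X_m`, and convex weights
`α_m`, one has `E‖Σ_m α_m B_m X_m‖² ≤ p σ² Σ α_m² + Σ_m α_m p (p + α_m (1−p)) ‖μs m‖²`. -/
theorem weighted_bernoulli_sum_second_moment
    {Ω : Type*} [MeasurableSpace Ω] {μ : Measure Ω} [IsProbabilityMeasure μ]
    {H : Type*} [NormedAddCommGroup H] [InnerProductSpace ℝ H] [CompleteSpace H]
    [MeasurableSpace H] [BorelSpace H]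
    {M : ℕ}
    (X : Fin M → Ω → H) (B : Fin M → Ω → ℝ) (μs : Fin M → H) (σ p : ℝ)
    (α : Fin M → ℝ)
    (hα01 : ∀ m, α m ∈ Set.Icc (0 : ℝ) 1)
    (hαsum : ∑ m, α m = 1)
    (hp0 : 0 ≤ p) (hp1 : p ≤ 1)
    (hXsq : ∀ m, MemLp (X m) 2 μ)
    (hXmean : ∀ m, ∫ ω, X m ω ∂μ = μs m)
    (hXvar : ∀ m, ∫ ω, ‖X m ω - μs m‖ ^ 2 ∂μ ≤ σ ^ 2)
    (hB01 : ∀ m ω, B m ω = 0 ∨ B m ω = 1)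
    (hBmeas : ∀ m, Measurable (B m))
    (hBp : ∀ m, μ {ω | B m ω = 1} = ENNReal.ofReal p)
    (hpairs : iIndepFun
      (fun m : Fin M => fun ω => (X m ω, B m ω)) μ)
    (hBX : ∀ m, IndepFun (B m) (X m) μ) :
    ∫ ω, ‖∑ m, α m • (B m ω • X m ω)‖ ^ 2 ∂μ ≤
      p * σ ^ 2 * ∑ m, (α m) ^ 2 +
        ∑ m, α m * (p * (p + α m * (1 - p))) * ‖μs m‖ ^ 2 := by
  have hXint : ∀ m, Integrable (X m) μ := fun m => (hXsq m).integrable (by norm_num)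
  have hBae : ∀ m, AEStronglyMeasurable (B m) μ := fun m => (hBmeas m).aestronglyMeasurable
  -- the mean of `B m`
  have hBmean : ∀ m, ∫ ω, B m ω ∂μ = p := by
    intro m
    have hs : MeasurableSet {ω | B m ω = 1} := hBmeas m (measurableSet_singleton 1)
    have h1 : B m = Set.indicator {ω | B m ω = 1} (fun _ => (1 : ℝ)) := by
      funext ω
      rcases hB01 m ω with h | h <;> simp [Set.indicator, h]
    rw [h1, integral_indicator_const _ hs]
    simp [Measure.real, hBp m, ENNReal.toReal_ofReal hp0]
  -- square integrability of `B m • X m`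
  have hY2 : ∀ m, MemLp (fun ω => B m ω • X m ω) 2 μ := by
    intro m
    refine (hXsq m).of_le ((hBae m).smul (hXsq m).1) (Filter.Eventually.of_forall fun ω => ?_)
    rcases hB01 m ω with h | h <;> simp [h]
  have hYint : ∀ m, Integrable (fun ω => B m ω • X m ω) μ :=
    fun m => (hY2 m).integrable (by norm_num)
  have hYmean : ∀ m, ∫ ω, B m ω • X m ω ∂μ = p • μs m := by
    intro m
    rw [(hBX m).integral_fun_smul_eq_smul_integral (hBae m) (hXsq m).1, hBmean, hXmean]
  have hXnsq : ∀ m, Integrable (fun ω => ‖X m ω‖ ^ 2) μ := 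
    fun m => (hXsq m).integrable_norm_pow (by norm_num)
  have hXnorm : ∀ m, ∫ ω, ‖X m ω‖ ^ 2 ∂μ ≤ σ ^ 2 + ‖μs m‖ ^ 2 := by
    intro m
    have h1 : ∫ ω, ‖X m ω - μs m‖ ^ 2 ∂μ = ∫ ω, ‖X m ω‖ ^ 2 ∂μ - ‖μs m‖ ^ 2 := by
      have h2 : ∀ ω, ‖X m ω - μs m‖ ^ 2
          = ‖X m ω‖ ^ 2 - 2 * inner ℝ (μs m) (X m ω) + ‖μs m‖ ^ 2 := by
        intro ω
        rw [norm_sub_sq_real, real_inner_comm]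
      have hi : Integrable (fun ω => 2 * inner ℝ (μs m) (X m ω)) μ :=
        ((hXint m).const_inner (μs m)).const_mul 2
      simp_rw [h2]
      have hs : Integrable (fun ω => ‖X m ω‖ ^ 2 - 2 * inner ℝ (μs m) (X m ω)) μ :=
        (hXnsq m).sub hi
      rw [integral_add hs (integrable_const _), integral_sub (hXnsq m) hi,
        integral_const_mul, integral_inner (hXint m), hXmean, real_inner_self_eq_norm_sq]
      simp
      ring
    have := hXvar m
    linarith
  have hYnorm : ∀ m, ∫ ω, inner ℝ (B m ω • X m ω) (B m ω • X m ω) ∂μ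
      ≤ p * (σ ^ 2 + ‖μs m‖ ^ 2) := by
    intro m
    have h1 : ∀ ω, inner ℝ (B m ω • X m ω) (B m ω • X m ω) = B m ω * ‖X m ω‖ ^ 2 := by
      intro ω
      rcases hB01 m ω with h | h <;> simp [h]
    have hind : IndepFun (B m) (fun ω => ‖X m ω‖ ^ 2) μ :=
      (hBX m).comp (φ := id) (ψ := fun x : H => ‖x‖ ^ 2) measurable_id (by fun_prop)
    simp_rw [h1]
    rw [hind.integral_fun_mul_eq_mul_integral (hBae m) (hXnsq m).1, hBmean]
    exact mul_le_mul_of_nonneg_left (hXnorm m) hp0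
  have hYcross : ∀ m n, m ≠ n → ∫ ω, inner ℝ (B m ω • X m ω) (B n ω • X n ω) ∂μ
      = p ^ 2 * inner ℝ (μs m) (μs n) := by
    intro m n hmn
    have hmeas : Measurable (fun z : H × ℝ => z.2 • z.1) :=
      (continuous_snd.smul continuous_fst).measurable
    have hind : IndepFun (fun ω => B m ω • X m ω) (fun ω => B n ω • X n ω) μ :=
      (hpairs.indepFun hmn).comp hmeas hmeas
    have this : ∫ ω, inner ℝ (B m ω • X m ω) (B n ω • X n ω) ∂μ
        = inner ℝ (∫ ω, B m ω • X m ω ∂μ) (∫ ω, B n ω • X n ω ∂μ) :=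
      hind.integral_bilin (hYint m) (hYint n) (innerSL ℝ)
    rw [this, hYmean, hYmean, real_inner_smul_left, real_inner_smul_right]
    ring
  have hYii : ∀ m n, Integrable (fun ω => inner ℝ (B m ω • X m ω) (B n ω • X n ω)) μ := by
    intro m n
    have h1 : Integrable (fun ω => ‖B m ω • X m ω‖ ^ 2) μ :=
      (hY2 m).integrable_norm_pow (by norm_num)
    have h2 : Integrable (fun ω => ‖B n ω • X n ω‖ ^ 2) μ :=
      (hY2 n).integrable_norm_pow (by norm_num)
    refine (h1.add h2).mono' ((hY2 m).1.inner (hY2 n).1) (Filter.Eventually.of_forall fun ω => ?_)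
    refine (norm_inner_le_norm (𝕜 := ℝ) _ _).trans ?_
    simp only [Pi.add_apply]
    nlinarith [sq_nonneg (‖B m ω • X m ω‖ - ‖B n ω • X n ω‖),
      sq_nonneg ‖B m ω • X m ω‖, sq_nonneg ‖B n ω • X n ω‖]
  have hexp : ∫ ω, ‖∑ m, α m • (B m ω • X m ω)‖ ^ 2 ∂μ
      = ∑ m, ∑ n, α m * α n * ∫ ω, inner ℝ (B m ω • X m ω) (B n ω • X n ω) ∂μ := by
    have h1 : ∀ ω, ‖∑ m, α m • (B m ω • X m ω)‖ ^ 2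
        = ∑ m, ∑ n, α m * α n * inner ℝ (B m ω • X m ω) (B n ω • X n ω) := by
      intro ω
      rw [← real_inner_self_eq_norm_sq, sum_inner]
      refine Finset.sum_congr rfl fun m _ => ?_
      rw [inner_sum]
      refine Finset.sum_congr rfl fun n _ => ?_
      rw [real_inner_smul_left, real_inner_smul_right (B m ω • X m ω)]
      ring
    simp_rw [h1]
    rw [integral_finsetSum _ fun m _ => integrable_finsetSum _ fun n _ => (hYii m n).const_mul _]
    refine Finset.sum_congr rfl fun m _ => ?_
    rw [integral_finsetSum _ fun n _ => (hYii m n).const_mul _]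
    exact Finset.sum_congr rfl fun n _ => integral_const_mul _ _
  have hsq : ‖∑ m, α m • μs m‖ ^ 2 = ∑ m, ∑ n, α m * α n * inner ℝ (μs m) (μs n) := by
    rw [← real_inner_self_eq_norm_sq, sum_inner]
    refine Finset.sum_congr rfl fun m _ => ?_
    rw [inner_sum]
    refine Finset.sum_congr rfl fun n _ => ?_
    rw [real_inner_smul_left, real_inner_smul_right]
    ring
  have hconv : ‖∑ m, α m • μs m‖ ^ 2 ≤ ∑ m, α m * ‖μs m‖ ^ 2 := by
    have h1 : ‖∑ m, α m • μs m‖ ≤ ∑ m, α m * ‖μs m‖ := by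
      refine (norm_sum_le _ _).trans (Finset.sum_le_sum fun m _ => ?_)
      rw [norm_smul, Real.norm_of_nonneg (hα01 m).1]
    calc ‖∑ m, α m • μs m‖ ^ 2 ≤ (∑ m, α m * ‖μs m‖) ^ 2 := by gcongr
      _ ≤ ∑ m, α m * ‖μs m‖ ^ 2 :=
        Real.pow_arith_mean_le_arith_mean_pow _ _ _ (fun m _ => (hα01 m).1) hαsum
          (fun m _ => norm_nonneg _) 2
  have hterm : ∀ m n, α m * α n * ∫ ω, inner ℝ (B m ω • X m ω) (B n ω • X n ω) ∂μ
      ≤ p ^ 2 * (α m * α n * inner ℝ (μs m) (μs n))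
        + if m = n then α m ^ 2 * (p * (σ ^ 2 + ‖μs m‖ ^ 2) - p ^ 2 * ‖μs m‖ ^ 2) else 0 := by
    intro m n
    by_cases h : m = n
    · subst h
      rw [if_pos rfl, real_inner_self_eq_norm_sq]
      have := mul_le_mul_of_nonneg_left (hYnorm m) (mul_self_nonneg (α m))
      linarith
    · rw [if_neg h, hYcross m n h]
      apply le_of_eq
      ring
  rw [hexp]
  calc _ ≤ ∑ m, ∑ n, (p ^ 2 * (α m * α n * inner ℝ (μs m) (μs n))
        + if m = n then α m ^ 2 * (p * (σ ^ 2 + ‖μs m‖ ^ 2) - p ^ 2 * ‖μs m‖ ^ 2) else 0) :=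
        Finset.sum_le_sum fun m _ => Finset.sum_le_sum fun n _ => hterm m n
    _ = p ^ 2 * ‖∑ m, α m • μs m‖ ^ 2
        + ∑ m, α m ^ 2 * (p * (σ ^ 2 + ‖μs m‖ ^ 2) - p ^ 2 * ‖μs m‖ ^ 2) := by
      rw [hsq]
      simp only [Finset.sum_add_distrib, Finset.mul_sum, Finset.sum_ite_eq, Finset.mem_univ,
        if_true]
    _ ≤ p ^ 2 * ∑ m, α m * ‖μs m‖ ^ 2
        + ∑ m, α m ^ 2 * (p * (σ ^ 2 + ‖μs m‖ ^ 2) - p ^ 2 * ‖μs m‖ ^ 2) := by gcongr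
    _ = _ := by
      simp only [Finset.mul_sum, ← Finset.sum_add_distrib]
      refine Finset.sum_congr rfl fun m _ => ?_
      ring
end

section
/- Consider M users and N clusters with a fixed assignment c(m) of user m to a cluster, cluster sets C_i = {m : c(m)=i}, aggregation weights α^c_m ∈ [0,1] with Σ_{m∈C_i} α^c_m = 1 for each i, α_{c_i} ∈ [0,1] with Σ_i α_{c_i} = 1, and α_m := α^c_m α_{c(m)}; differentiable losses F_m : ℝ^d → ℝ with L-Lipschitz gradients; f_{c_i} := Σ_{m∈C_i} α^c_m F_m and f := Σ_i α_{c_i} f_{c_i}; suppose for every w ∈ ℝ^d: Σ_{i=1}^{N} α_{c_i}‖∇f_{c_i}(w) − ∇f(w)‖² ≤ ε_g² and, for each i, Σ_{m∈C_i} α^c_m‖∇F_m(w) − ∇f_{c_i}(w)‖² ≤ ε_c². Then for every w ∈ ℝ^d, every family of points z_1, …, z_N ∈ ℝ^d, and every family y_1, …, y_M ∈ ℝ^d: Σ_{m=1}^{M} α_m‖∇f(w) − ∇F_m(y_m)‖² ≤ 4 L² Σ_{i=1}^{N} α_{c_i}‖w − z_i‖² + 4 ε_g² + 4 L² Σ_{m=1}^{M}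 α_m‖z_{c(m)} − y_m‖² + 4 ε_c². -/
open Finset

lemma norm_four_sq {E : Type*} [NormedAddCommGroup E] (a b p q e : E) :
    ‖a - e‖ ^ 2 ≤ 4 * (‖b - a‖ ^ 2 + ‖b - p‖ ^ 2 + ‖q - p‖ ^ 2 + ‖q - e‖ ^ 2) := by
  have h : ‖a - e‖ ≤ ‖b - a‖ + ‖b - p‖ + ‖q - p‖ + ‖q - e‖ := by
    have h1 := norm_sub_le_norm_sub_add_norm_sub a b e
    have h2 := norm_sub_le_norm_sub_add_norm_sub b p e
    have h3 := norm_sub_le_norm_sub_add_norm_sub p q e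
    rw [norm_sub_rev a b] at h1
    rw [norm_sub_rev p q] at h3
    linarith
  have h0 := norm_nonneg (a - e)
  have h2 : ‖a - e‖ ^ 2 ≤ (‖b - a‖ + ‖b - p‖ + ‖q - p‖ + ‖q - e‖) ^ 2 := by gcongr
  generalize ‖b - a‖ = x1 at *
  generalize ‖b - p‖ = x2 at *
  generalize ‖q - p‖ = x3 at *
  generalize ‖q - e‖ = x4 at *
  nlinarith [sq_nonneg (x1 - x2), sq_nonneg (x1 - x3), sq_nonneg (x1 - x4), sq_nonneg (x2 - x3),
    sq_nonneg (x2 - x4), sq_nonneg (x3 - x4)]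

lemma gradient_wsum {d : ℕ} {ι : Type*} (s : Finset ι) (a : ι → ℝ)
    (F : ι → EuclideanSpace ℝ (Fin d) → ℝ) (hF : ∀ m, Differentiable ℝ (F m))
    (g : EuclideanSpace ℝ (Fin d) → ℝ) (hg : ∀ x, g x = ∑ m ∈ s, a m * F m x)
    (x : EuclideanSpace ℝ (Fin d)) :
    gradient g x = ∑ m ∈ s, a m • gradient (F m) x := by
  have h : HasFDerivAt g (∑ m ∈ s, a m • fderiv ℝ (F m) x) x := by
    have : g = fun x => ∑ m ∈ s, a m * F m x := funext hg
    rw [this]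
    exact HasFDerivAt.fun_sum fun m _ => ((hF m x).hasFDerivAt.const_mul (a m))
  simp only [gradient, h.fderiv, map_sum, map_smulₛₗ]
  simp

/-- Under bounded divergence of cluster/global gradients and
`L`-Lipschitz gradients, the weighted squared deviation between the global gradient at `w`
and the local gradients at arbitrary points `y m` is controlled by the weighted squared
distances through arbitrary anchor points `z i`. -/
theorem gradient_divergence_decomposition
    {d M N : ℕ} (c : Fin M → Fin N)
    (αc : Fin M → ℝ) (αC : Fin N → ℝ) (α : Fin M → ℝ)
    (hαc01 : ∀ m, αc m ∈ Set.Icc (0 : ℝ) 1)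
    (hαcsum : ∀ i, ∑ m ∈ univ.filter (fun m => c m = i), αc m = 1)
    (hαC01 : ∀ i, αC i ∈ Set.Icc (0 : ℝ) 1)
    (hαCsum : ∑ i, αC i = 1)
    (hα : ∀ m, α m = αc m * αC (c m))
    (F : Fin M → EuclideanSpace ℝ (Fin d) → ℝ)
    (fc : Fin N → EuclideanSpace ℝ (Fin d) → ℝ)
    (f : EuclideanSpace ℝ (Fin d) → ℝ)
    (hFdiff : ∀ m, Differentiable ℝ (F m))
    (hfc : ∀ i x, fc i x = ∑ m ∈ univ.filter (fun m => c m = i), αc m * F m x)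
    (hf : ∀ x, f x = ∑ i, αC i * fc i x)
    (L εg εc : ℝ) (hL : 0 < L)
    (hLip : ∀ m, LipschitzWith L.toNNReal (gradient (F m)))
    (hdivg : ∀ x, ∑ i, αC i * ‖gradient (fc i) x - gradient f x‖ ^ 2 ≤ εg ^ 2)
    (hdivc : ∀ i x, ∑ m ∈ univ.filter (fun m => c m = i),
        αc m * ‖gradient (F m) x - gradient (fc i) x‖ ^ 2 ≤ εc ^ 2)
    (w : EuclideanSpace ℝ (Fin d)) (z : Fin N → EuclideanSpace ℝ (Fin d))
    (y : Fin M → EuclideanSpace ℝ (Fin d)) :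
    ∑ m, α m * ‖gradient f w - gradient (F m) (y m)‖ ^ 2 ≤
      4 * L ^ 2 * ∑ i, αC i * ‖w - z i‖ ^ 2 + 4 * εg ^ 2 +
        4 * L ^ 2 * ∑ m, α m * ‖z (c m) - y m‖ ^ 2 + 4 * εc ^ 2 := by
  have hlip : ∀ m x x', ‖gradient (F m) x - gradient (F m) x'‖ ≤ L * ‖x - x'‖ := by
    intro m x x'
    have := (hLip m).dist_le_mul x x'
    rwa [dist_eq_norm, dist_eq_norm, Real.coe_toNNReal _ hL.le] at this
  have hlipc : ∀ i x x', ‖gradient (fc i) x - gradient (fc i) x'‖ ≤ L * ‖x - x'‖ := by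
    intro i x x'
    rw [gradient_wsum _ αc F hFdiff (fc i) (hfc i), gradient_wsum _ αc F hFdiff (fc i) (hfc i),
      ← Finset.sum_sub_distrib]
    calc _ ≤ ∑ m ∈ univ.filter (fun m => c m = i), αc m * (L * ‖x - x'‖) := by
          refine norm_sum_le_of_le _ fun m _ => ?_
          rw [← smul_sub, norm_smul, Real.norm_of_nonneg (hαc01 m).1]
          exact mul_le_mul_of_nonneg_left (hlip m x x') (hαc01 m).1
      _ = _ := by rw [← Finset.sum_mul, hαcsum, one_mul]
  have hfib : ∀ g : Fin M → ℝ, ∑ m, α m * g m =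
      ∑ i, αC i * ∑ m ∈ univ.filter (fun m => c m = i), αc m * g m := by
    intro g
    rw [← Finset.sum_fiberwise univ c]
    refine Finset.sum_congr rfl fun i _ => ?_
    rw [Finset.mul_sum]
    refine Finset.sum_congr rfl fun m hm => ?_
    have hm' : c m = i := by simpa using hm
    rw [hα, hm']
    ring
  have hfibc : ∀ g : Fin N → ℝ, ∑ m, α m * g (c m) = ∑ i, αC i * g i := by
    intro g
    rw [hfib]
    refine Finset.sum_congr rfl fun i _ => ?_
    have : ∑ m ∈ univ.filter (fun m => c m = i), αc m * g (c m) =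
        ∑ m ∈ univ.filter (fun m => c m = i), αc m * g i := by
      refine Finset.sum_congr rfl fun m hm => ?_
      have hm' : c m = i := by simpa using hm
      rw [hm']
    rw [this, ← Finset.sum_mul, hαcsum, one_mul]
  have hα0 : ∀ m, 0 ≤ α m := fun m => by
    rw [hα]; exact mul_nonneg (hαc01 m).1 (hαC01 _).1
  have hB : ∑ m, α m * ‖gradient (F m) (z (c m)) - gradient (fc (c m)) (z (c m))‖ ^ 2
      ≤ εc ^ 2 := by
    rw [hfib]
    calc _ ≤ ∑ i, αC i * εc ^ 2 := by
          refine Finset.sum_le_sum fun i _ => mul_le_mul_of_nonneg_left ?_ (hαC01 i).1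
          refine le_trans (le_of_eq ?_) (hdivc i (z i))
          refine Finset.sum_congr rfl fun m hm => ?_
          have hm' : c m = i := by simpa using hm
          rw [hm']
      _ = _ := by rw [← Finset.sum_mul, hαCsum, one_mul]
  have hA := hdivg w
  rw [← hfibc (fun i => ‖gradient (fc i) w - gradient f w‖ ^ 2)] at hA
  rw [← hfibc (fun i => ‖w - z i‖ ^ 2)]
  calc _ ≤ ∑ m, (4 * L ^ 2 * (α m * ‖w - z (c m)‖ ^ 2)
          + 4 * (α m * ‖gradient (fc (c m)) w - gradient f w‖ ^ 2)
          + 4 * L ^ 2 * (α m * ‖z (c m) - y m‖ ^ 2)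
          + 4 * (α m * ‖gradient (F m) (z (c m)) - gradient (fc (c m)) (z (c m))‖ ^ 2)) := by
        refine Finset.sum_le_sum fun m _ => ?_
        have h1 := norm_four_sq (gradient f w) (gradient (fc (c m)) w)
          (gradient (fc (c m)) (z (c m))) (gradient (F m) (z (c m))) (gradient (F m) (y m))
        have h2 := pow_le_pow_left₀ (norm_nonneg _) (hlipc (c m) w (z (c m))) 2
        have h3 := pow_le_pow_left₀ (norm_nonneg _) (hlip m (z (c m)) (y m)) 2
        rw [mul_pow] at h2 h3
        have h4 : ‖gradient f w - gradient (F m) (y m)‖ ^ 2 ≤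
            4 * (‖gradient (fc (c m)) w - gradient f w‖ ^ 2 + L ^ 2 * ‖w - z (c m)‖ ^ 2
            + ‖gradient (F m) (z (c m)) - gradient (fc (c m)) (z (c m))‖ ^ 2
            + L ^ 2 * ‖z (c m) - y m‖ ^ 2) := by linarith
        refine (mul_le_mul_of_nonneg_left h4 (hα0 m)).trans (le_of_eq ?_)
        ring
    _ ≤ _ := by
        simp only [Finset.sum_add_distrib, ← Finset.mul_sum]
        linarith
end

section
/- Consider M users and N clusters with a fixed assignment c(m) of user m to a cluster, cluster sets C_i = {m : c(m)=i}, aggregation weights α^c_m ∈ [0,1] with Σ_{m∈C_i} α^c_m = 1 for each i, α_{c_i} ∈ [0,1] with Σ_i α_{c_i} = 1, and α_m := α^c_m α_{c(m)}. On a probability space let {Z_m^τ : 1 ≤ m ≤ M, 0 ≤ τ < κ} be a family of mutually independent square-integrable random vectors in ℝ^d with E[Z_m^τ] = 0 and E‖Z_m^τ‖² ≤ v for all m, τ. Then Σ_{i=1}^{N} α_{c_i} Σ_{m∈C_i} α^c_m · E‖ Σ_{τ=0}^{κ−1} ( Z_m^τ − Σ_{j∈C_i} α^c_j Z_j^τ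 ) ‖² ≤ κ · v · Σ_{m=1}^{M} α_m (1 − α^c_m). -/
open MeasureTheory ProbabilityTheory Finset

lemma aux_sum_sq {ι Ω E : Type*} [MeasurableSpace Ω] {μ : Measure Ω} [IsProbabilityMeasure μ]
    [NormedAddCommGroup E] [InnerProductSpace ℝ E] [CompleteSpace E] [MeasurableSpace E]
    [BorelSpace E]
    (X : ι → Ω → E) (h2 : ∀ p, MemLp (X p) 2 μ) (h0 : ∀ p, ∫ ω, X p ω ∂μ = 0)
    (hind : iIndepFun X μ) (s : Finset ι) (b : ι → ℝ) :
    ∫ ω, ‖∑ p ∈ s, b p • X p ω‖ ^ 2 ∂μ = ∑ p ∈ s, b p ^ 2 * ∫ ω, ‖X p ω‖ ^ 2 ∂μ := by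
  classical
  have hi : ∀ p, Integrable (X p) μ := fun p => (h2 p).integrable (by norm_num)
  have hint : ∀ p q, Integrable (fun ω => inner ℝ (X p ω) (X q ω)) μ := by
    intro p q
    by_cases hpq : p = q
    · subst hpq
      simp only [real_inner_self_eq_norm_sq]
      exact (h2 p).integrable_norm_pow (p := 2) (by norm_num)
    · exact (hind.indepFun hpq).integrable_bilin (hi p) (hi q) (innerSL ℝ)
  have horth : ∀ p q, p ≠ q → ∫ ω, inner ℝ (X p ω) (X q ω) ∂μ = 0 := by
    intro p q hpq
    have := (hind.indepFun hpq).integral_bilin (hi p) (hi q) (innerSL ℝ)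
    rw [h0 p] at this
    rw [map_zero] at this
    exact this
  have e : ∀ ω, ‖∑ p ∈ s, b p • X p ω‖ ^ 2
      = ∑ p ∈ s, ∑ q ∈ s, b p * b q * inner ℝ (X p ω) (X q ω) := by
    intro ω
    rw [← real_inner_self_eq_norm_sq, sum_inner]
    refine sum_congr rfl fun p _ => ?_
    rw [inner_sum]
    refine sum_congr rfl fun q _ => ?_
    rw [real_inner_smul_left, real_inner_smul_right]; ring
  simp only [e]
  rw [integral_finsetSum _ fun p _ => integrable_finsetSum _ fun q _ => (hint p q).const_mul _]
  refine sum_congr rfl fun p hp => ?_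
  rw [integral_finsetSum _ fun q _ => (hint p q).const_mul _]
  rw [Finset.sum_eq_single p]
  · rw [integral_const_mul]
    simp only [real_inner_self_eq_norm_sq]; ring
  · intro q _ hq
    rw [integral_const_mul, horth p q (Ne.symm hq), mul_zero]
  · exact fun h => absurd hp h

lemma aux_variance {ι E : Type*} [NormedAddCommGroup E] [InnerProductSpace ℝ E]
    (s : Finset ι) (a : ι → ℝ) (ha : ∑ m ∈ s, a m = 1) (S : ι → E) :
    ∑ m ∈ s, a m * ‖S m - ∑ j ∈ s, a j • S j‖ ^ 2
      = ∑ m ∈ s, a m * ‖S m‖ ^ 2 - ‖∑ j ∈ s, a j • S j‖ ^ 2 := by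
  set T := ∑ j ∈ s, a j • S j with hT
  have h1 : ∑ m ∈ s, a m * inner ℝ (S m) T = ‖T‖ ^ 2 := by
    rw [← real_inner_self_eq_norm_sq]
    conv_rhs => rw [hT, sum_inner]
    simp only [real_inner_smul_left, hT]
  have : ∀ m, a m * ‖S m - T‖ ^ 2
      = a m * ‖S m‖ ^ 2 - 2 * (a m * inner ℝ (S m) T) + a m * ‖T‖ ^ 2 := by
    intro m; rw [norm_sub_sq_real]; ring
  simp only [this, sum_add_distrib, sum_sub_distrib, ← mul_sum, ← sum_mul, ha, h1]
  ring

/-- For a mutually independent, centered family `Z m τ` with second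
moments at most `v`, the weighted mean-square deviation of the `κ`-step sums from their
cluster averages is at most `κ v Σ_m α_m (1 − α^c_m)`. -/
theorem centered_sum_cluster_deviation_bound
    {d M N κ : ℕ} (hκ : 1 ≤ κ) (c : Fin M → Fin N)
    (αc : Fin M → ℝ) (αC : Fin N → ℝ) (α : Fin M → ℝ)
    (hαc01 : ∀ m, αc m ∈ Set.Icc (0 : ℝ) 1)
    (hαcsum : ∀ i, ∑ m ∈ univ.filter (fun m => c m = i), αc m = 1)
    (hαC01 : ∀ i, αC i ∈ Set.Icc (0 : ℝ) 1)
    (hαCsum : ∑ i, αC i = 1)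
    (hα : ∀ m, α m = αc m * αC (c m))
    {Ω : Type*} [MeasurableSpace Ω] {μ : Measure Ω} [IsProbabilityMeasure μ]
    (Z : Fin M → Fin κ → Ω → EuclideanSpace ℝ (Fin d))
    (v : ℝ)
    (hZmeas : ∀ m τ, Measurable (Z m τ))
    (hZsq : ∀ m τ, MemLp (Z m τ) 2 μ)
    (hZmean : ∀ m τ, ∫ ω, Z m τ ω ∂μ = 0)
    (hZvar : ∀ m τ, ∫ ω, ‖Z m τ ω‖ ^ 2 ∂μ ≤ v)
    (hindep : iIndepFun
      (fun p : Fin M × Fin κ => Z p.1 p.2) μ) :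
    ∑ i, αC i * ∑ m ∈ univ.filter (fun m => c m = i), αc m *
        ∫ ω, ‖∑ τ, (Z m τ ω -
          ∑ j ∈ univ.filter (fun j => c j = i), αc j • Z j τ ω)‖ ^ 2 ∂μ ≤
      (κ : ℝ) * v * ∑ m, α m * (1 - αc m) := by
  set X : Fin M × Fin κ → Ω → EuclideanSpace ℝ (Fin d) := fun p => Z p.1 p.2 with hX
  have key := aux_sum_sq X (fun p => hZsq p.1 p.2) (fun p => hZmean p.1 p.2) hindep
  have hSL : ∀ m, MemLp (fun ω => ∑ τ, Z m τ ω) 2 μ := fun m =>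
    memLp_finsetSum _ fun τ _ => hZsq m τ
  have hE : ∀ m, ∫ ω, ‖∑ τ, Z m τ ω‖ ^ 2 ∂μ = ∑ τ, ∫ ω, ‖Z m τ ω‖ ^ 2 ∂μ := by
    intro m
    have := key ({m} ×ˢ univ) (fun _ => 1)
    simpa [sum_product, hX] using this
  have hEle : ∀ m, ∫ ω, ‖∑ τ, Z m τ ω‖ ^ 2 ∂μ ≤ κ * v := by
    intro m
    rw [hE]
    calc _ ≤ ∑ τ : Fin κ, v := sum_le_sum fun τ _ => hZvar m τ
      _ = _ := by simp
  have hT : ∀ s : Finset (Fin M), ∫ ω, ‖∑ j ∈ s, αc j • ∑ τ, Z j τ ω‖ ^ 2 ∂μ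
      = ∑ j ∈ s, αc j ^ 2 * ∫ ω, ‖∑ τ, Z j τ ω‖ ^ 2 ∂μ := by
    intro s
    have := key (s ×ˢ univ) (fun p => αc p.1)
    simp only [sum_product, hX] at this
    simp only [hE, mul_sum, smul_sum]
    exact this
  have hcl : ∀ i, ∑ m ∈ univ.filter (fun m => c m = i), αc m *
        ∫ ω, ‖∑ τ, (Z m τ ω -
          ∑ j ∈ univ.filter (fun j => c j = i), αc j • Z j τ ω)‖ ^ 2 ∂μ ≤
      ∑ m ∈ univ.filter (fun m => c m = i), αc m * ((κ * v) * (1 - αc m)) := by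
    intro i
    set s := univ.filter (fun m => c m = i) with hs
    have e1 : ∀ m ω, ∑ τ, (Z m τ ω - ∑ j ∈ s, αc j • Z j τ ω)
        = (∑ τ, Z m τ ω) - ∑ j ∈ s, αc j • ∑ τ, Z j τ ω := by
      intro m ω
      rw [sum_sub_distrib, sum_comm]
      simp only [smul_sum]
    simp only [e1]
    have hTL : MemLp (fun ω => ∑ j ∈ s, αc j • ∑ τ, Z j τ ω) 2 μ :=
      memLp_finsetSum _ fun j _ => (hSL j).const_smul (αc j)
    have e2 : ∑ m ∈ s, αc m * ∫ ω, ‖(∑ τ, Z m τ ω) - ∑ j ∈ s, αc j • ∑ τ, Z j τ ω‖ ^ 2 ∂μ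
        = ∑ m ∈ s, αc m * ∫ ω, ‖∑ τ, Z m τ ω‖ ^ 2 ∂μ
          - ∫ ω, ‖∑ j ∈ s, αc j • ∑ τ, Z j τ ω‖ ^ 2 ∂μ := by
      have hA : ∀ m, Integrable (fun ω => αc m * ‖∑ τ, Z m τ ω‖ ^ 2) μ := fun m =>
        ((hSL m).integrable_norm_pow (p := 2) (by norm_num)).const_mul _
      have hB : Integrable (fun ω => ‖∑ j ∈ s, αc j • ∑ τ, Z j τ ω‖ ^ 2) μ :=
        hTL.integrable_norm_pow (p := 2) (by norm_num)
      have hC : ∀ m, Integrable (fun ω =>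
          αc m * ‖(∑ τ, Z m τ ω) - ∑ j ∈ s, αc j • ∑ τ, Z j τ ω‖ ^ 2) μ := fun m =>
        (((hSL m).sub hTL).integrable_norm_pow (p := 2) (by norm_num)).const_mul _
      simp only [← integral_const_mul]
      rw [← integral_finsetSum _ fun m _ => hC m, ← integral_finsetSum _ fun m _ => hA m,
        ← integral_sub (integrable_finsetSum _ fun m _ => hA m) hB]
      exact integral_congr_ae (Filter.Eventually.of_forall fun ω =>
        aux_variance s αc (hαcsum i) (fun m => ∑ τ, Z m τ ω))
    rw [e2, hT, ← sum_sub_distrib]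
    refine sum_le_sum fun m _ => ?_
    have h := mul_le_mul_of_nonneg_left (hEle m)
      (mul_nonneg (hαc01 m).1 (sub_nonneg.2 (hαc01 m).2))
    linarith
  calc _ ≤ ∑ i, αC i * ∑ m ∈ univ.filter (fun m => c m = i), αc m * ((κ * v) * (1 - αc m)) :=
        sum_le_sum fun i _ => mul_le_mul_of_nonneg_left (hcl i) (hαC01 i).1
    _ = ∑ i, ∑ m ∈ univ.filter (fun m => c m = i), (κ * v) * (α m * (1 - αc m)) := by
        refine sum_congr rfl fun i _ => ?_
        rw [mul_sum]
        refine sum_congr rfl fun m hm => ?_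
        rw [hα, (mem_filter.1 hm).2]; ring
    _ = _ := by rw [sum_fiberwise, mul_sum]
end

section
/- Consider M users and N clusters with a fixed assignment c(m) of user m to a cluster, cluster sets C_i = {m : c(m)=i}, weights α^c_m ∈ [0,1] with Σ_{m∈C_i} α^c_m = 1 for each i, α_{c_i} ∈ [0,1] with Σ_i α_{c_i} = 1, and α_m := α^c_m α_{c(m)}; differentiable losses F_m : ℝ^d → ℝ with L-Lipschitz gradients, f_{c_i} := Σ_{m∈C_i} α^c_m F_m, and suppose for every w ∈ ℝ^d and each i: Σ_{m∈C_i} α^c_m‖∇F_m(w) − ∇f_{c_i}(w)‖² ≤ ε_c². Then for any integer κ ≥ 1, any points w_m^τ ∈ ℝ^d (1 ≤ m ≤ M, 0 ≤ τ < κ) and any points z_i^τ ∈ ℝ^d (1 ≤ i ≤ N, 0 ≤ τ < κ): Σ_{m=1}^{M} α_m ‖ Σ_{τ=0}^{κ−1} ( ∇F_m(w_m^τ) − Σ_{j∈C(m)} α^c_j ∇F_j(w_j^τ) ) ‖² ≤ 6 L² κ Σ_{m=1}^{M} Σ_{τ=0}^{κ−1} α_m ‖ w_m^τ − z_{c(m)}^τ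 ‖² + 3 κ² ε_c², where C(m) denotes the cluster set C_{c(m)} containing m. -/
open Finset

lemma aux_jensen {ι E : Type*} [NormedAddCommGroup E] [NormedSpace ℝ E] (s : Finset ι)
    (a : ι → ℝ) (ha : ∀ m ∈ s, 0 ≤ a m) (hs : ∑ m ∈ s, a m = 1) (v : ι → E) :
    ‖∑ m ∈ s, a m • v m‖ ^ 2 ≤ ∑ m ∈ s, a m * ‖v m‖ ^ 2 := by
  have h1 : ‖∑ m ∈ s, a m • v m‖ ≤ ∑ m ∈ s, a m * ‖v m‖ := by
    refine (norm_sum_le _ _).trans (Finset.sum_le_sum fun m hm => ?_)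
    rw [norm_smul, Real.norm_of_nonneg (ha m hm)]
  calc _ ≤ (∑ m ∈ s, a m * ‖v m‖) ^ 2 := by gcongr
    _ ≤ _ := Real.pow_arith_mean_le_arith_mean_pow s a (fun m => ‖v m‖) ha hs
        (fun m _ => norm_nonneg _) 2

lemma aux_three {E : Type*} [NormedAddCommGroup E] (x y z : E) :
    ‖x + y + z‖ ^ 2 ≤ 3 * (‖x‖ ^ 2 + ‖y‖ ^ 2 + ‖z‖ ^ 2) := by
  have h : ‖x + y + z‖ ≤ ‖x‖ + ‖y‖ + ‖z‖ := norm_add₃_le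
  have h2 : ‖x + y + z‖ ^ 2 ≤ (‖x‖ + ‖y‖ + ‖z‖) ^ 2 := by gcongr
  nlinarith [sq_nonneg (‖x‖ - ‖y‖), sq_nonneg (‖y‖ - ‖z‖), sq_nonneg (‖x‖ - ‖z‖)]

lemma aux_cluster {ι E : Type*} [NormedAddCommGroup E] [NormedSpace ℝ E] (s : Finset ι)
    (a : ι → ℝ) (ha : ∀ m ∈ s, 0 ≤ a m) (hs : ∑ m ∈ s, a m = 1) (g h : ι → E)
    (L e : ℝ) (D : ι → ℝ) (hg : ∀ m ∈ s, ‖g m - h m‖ ≤ L * D m)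
    (he : ∑ m ∈ s, a m * ‖h m - ∑ j ∈ s, a j • h j‖ ^ 2 ≤ e) :
    ∑ m ∈ s, a m * ‖g m - ∑ j ∈ s, a j • g j‖ ^ 2 ≤
      6 * L ^ 2 * ∑ m ∈ s, a m * D m ^ 2 + 3 * e := by
  have hd : ∑ m ∈ s, a m * ‖g m - h m‖ ^ 2 ≤ L ^ 2 * ∑ m ∈ s, a m * D m ^ 2 := by
    rw [Finset.mul_sum]
    refine Finset.sum_le_sum fun m hm => ?_
    have : ‖g m - h m‖ ^ 2 ≤ (L * D m) ^ 2 := by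
      have := hg m hm
      gcongr
    nlinarith [mul_le_mul_of_nonneg_left this (ha m hm)]
  have hj : ‖∑ j ∈ s, a j • h j - ∑ j ∈ s, a j • g j‖ ^ 2 ≤ L ^ 2 * ∑ m ∈ s, a m * D m ^ 2 := by
    refine le_trans ?_ hd
    rw [norm_sub_rev, ← Finset.sum_sub_distrib]
    simp_rw [← smul_sub]
    exact aux_jensen s a ha hs _
  have key : ∑ m ∈ s, a m * ‖g m - ∑ j ∈ s, a j • g j‖ ^ 2 ≤
      ∑ m ∈ s, (3 * (a m * ‖g m - h m‖ ^ 2) + 3 * (a m * ‖h m - ∑ j ∈ s, a j • h j‖ ^ 2)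
        + a m * (3 * ‖∑ j ∈ s, a j • h j - ∑ j ∈ s, a j • g j‖ ^ 2)) := by
    refine Finset.sum_le_sum fun m hm => ?_
    have h3 := aux_three (g m - h m) (h m - ∑ j ∈ s, a j • h j)
      (∑ j ∈ s, a j • h j - ∑ j ∈ s, a j • g j)
    rw [sub_add_sub_cancel, sub_add_sub_cancel] at h3
    nlinarith [mul_le_mul_of_nonneg_left h3 (ha m hm)]
  rw [Finset.sum_add_distrib, Finset.sum_add_distrib, ← Finset.mul_sum, ← Finset.mul_sum,
    ← Finset.sum_mul, hs] at key
  linarith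

/-- Accumulated deviation of local gradients from their cluster averages
over `κ` steps is controlled by `6 L² κ` times the accumulated squared distances to the
cluster anchors plus `3 κ² ε_c²`. -/
theorem local_gradient_drift_bound
    {d M N : ℕ} (c : Fin M → Fin N)
    (αc : Fin M → ℝ) (αC : Fin N → ℝ) (α : Fin M → ℝ)
    (hαc01 : ∀ m, αc m ∈ Set.Icc (0 : ℝ) 1)
    (hαcsum : ∀ i, ∑ m ∈ univ.filter (fun m => c m = i), αc m = 1)
    (hαC01 : ∀ i, αC i ∈ Set.Icc (0 : ℝ) 1)
    (hαCsum : ∑ i, αC i = 1)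
    (hα : ∀ m, α m = αc m * αC (c m))
    (F : Fin M → EuclideanSpace ℝ (Fin d) → ℝ)
    (fc : Fin N → EuclideanSpace ℝ (Fin d) → ℝ)
    (hFdiff : ∀ m, Differentiable ℝ (F m))
    (hfc : ∀ i x, fc i x = ∑ m ∈ univ.filter (fun m => c m = i), αc m * F m x)
    (L εc : ℝ) (hL : 0 < L)
    (hLip : ∀ m, LipschitzWith L.toNNReal (gradient (F m)))
    (hdivc : ∀ i x, ∑ m ∈ univ.filter (fun m => c m = i),
        αc m * ‖gradient (F m) x - gradient (fc i) x‖ ^ 2 ≤ εc ^ 2)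
    (κ : ℕ) (hκ : 1 ≤ κ)
    (w : Fin M → ℕ → EuclideanSpace ℝ (Fin d))
    (z : Fin N → ℕ → EuclideanSpace ℝ (Fin d)) :
    ∑ m, α m * ‖∑ τ ∈ range κ, (gradient (F m) (w m τ) -
        ∑ j ∈ univ.filter (fun j => c j = c m), αc j • gradient (F j) (w j τ))‖ ^ 2 ≤
      6 * L ^ 2 * κ * ∑ m, ∑ τ ∈ range κ, α m * ‖w m τ - z (c m) τ‖ ^ 2 +
        3 * (κ : ℝ) ^ 2 * εc ^ 2 := by
  have hgrad : ∀ i x, gradient (fc i) x =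
      ∑ j ∈ univ.filter (fun m => c m = i), αc j • gradient (F j) x := by
    intro i x
    have h1 : HasFDerivAt (fc i)
        (∑ j ∈ univ.filter (fun m => c m = i), αc j • fderiv ℝ (F j) x) x := by
      have h2 : fc i = fun x => ∑ m ∈ univ.filter (fun m => c m = i), αc m * F m x :=
        funext (hfc i)
      rw [h2]
      exact HasFDerivAt.fun_sum fun j _ => ((hFdiff j x).hasFDerivAt.const_mul (αc j))
    simp only [gradient, h1.fderiv, map_sum, map_smulₛₗ]
    simp
  have hstep : ∀ i τ, ∑ m ∈ univ.filter (fun m => c m = i), αc m *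
      ‖gradient (F m) (w m τ) - ∑ j ∈ univ.filter (fun j => c j = i),
        αc j • gradient (F j) (w j τ)‖ ^ 2 ≤
      6 * L ^ 2 * ∑ m ∈ univ.filter (fun m => c m = i), αc m * ‖w m τ - z i τ‖ ^ 2
        + 3 * εc ^ 2 := by
    intro i τ
    refine aux_cluster _ αc (fun m _ => (hαc01 m).1) (hαcsum i)
      (fun m => gradient (F m) (w m τ)) (fun m => gradient (F m) (z i τ)) L (εc ^ 2)
      (fun m => ‖w m τ - z i τ‖) (fun m _ => ?_) ?_
    · have := (hLip m).norm_sub_le (w m τ) (z i τ)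
      rwa [Real.coe_toNNReal _ hL.le] at this
    · have := hdivc i (z i τ)
      rwa [hgrad] at this
  have hstep2 : ∀ τ, ∑ m, α m *
      ‖gradient (F m) (w m τ) - ∑ j ∈ univ.filter (fun j => c j = c m),
        αc j • gradient (F j) (w j τ)‖ ^ 2 ≤
      6 * L ^ 2 * ∑ m, α m * ‖w m τ - z (c m) τ‖ ^ 2 + 3 * εc ^ 2 := by
    intro τ
    have fib : ∀ G : Fin M → Fin N → ℝ, ∑ m, α m * G m (c m) =
        ∑ i, αC i * ∑ m ∈ univ.filter (fun m => c m = i), αc m * G m i := by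
      intro G
      rw [← Finset.sum_fiberwise univ c]
      refine Finset.sum_congr rfl fun i _ => ?_
      rw [Finset.mul_sum]
      refine Finset.sum_congr rfl fun m hm => ?_
      have hm' : c m = i := (Finset.mem_filter.1 hm).2
      rw [hα, hm']
      ring
    rw [fib (fun m i => ‖gradient (F m) (w m τ) - ∑ j ∈ univ.filter (fun j => c j = i),
        αc j • gradient (F j) (w j τ)‖ ^ 2), fib (fun m i => ‖w m τ - z i τ‖ ^ 2)]
    refine (Finset.sum_le_sum fun i _ =>
      mul_le_mul_of_nonneg_left (hstep i τ) (hαC01 i).1).trans (le_of_eq ?_)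
    simp_rw [mul_add]
    rw [Finset.sum_add_distrib, ← Finset.sum_mul, hαCsum, one_mul, Finset.mul_sum]
    congr 1
    exact Finset.sum_congr rfl fun i _ => by ring
  have hα0 : ∀ m, 0 ≤ α m := fun m => by
    rw [hα]; exact mul_nonneg (hαc01 m).1 (hαC01 _).1
  have hpow : ∀ v : ℕ → EuclideanSpace ℝ (Fin d),
      ‖∑ τ ∈ range κ, v τ‖ ^ 2 ≤ κ * ∑ τ ∈ range κ, ‖v τ‖ ^ 2 := by
    intro v
    have h1 : ‖∑ τ ∈ range κ, v τ‖ ^ 2 ≤ (∑ τ ∈ range κ, ‖v τ‖) ^ 2 := by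
      have := norm_sum_le (range κ) v
      gcongr
    refine h1.trans ?_
    have := sq_sum_le_card_mul_sum_sq (s := range κ) (f := fun τ => ‖v τ‖)
    rwa [Finset.card_range] at this
  refine (Finset.sum_le_sum fun m _ =>
    mul_le_mul_of_nonneg_left (hpow _) (hα0 m)).trans ?_
  have e1 : ∀ G : Fin M → ℕ → ℝ, ∑ m, α m * ((κ : ℝ) * ∑ τ ∈ range κ, G m τ) =
      κ * ∑ τ ∈ range κ, ∑ m, α m * G m τ := by
    intro G
    rw [Finset.sum_comm, Finset.mul_sum]
    refine Finset.sum_congr rfl fun m _ => ?_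
    rw [← Finset.mul_sum]
    ring
  rw [e1 (fun m τ => ‖gradient (F m) (w m τ) - ∑ j ∈ univ.filter (fun j => c j = c m),
        αc j • gradient (F j) (w j τ)‖ ^ 2)]
  refine (mul_le_mul_of_nonneg_left (Finset.sum_le_sum fun τ _ => hstep2 τ)
    (Nat.cast_nonneg κ)).trans (le_of_eq ?_)
  rw [Finset.sum_add_distrib, ← Finset.mul_sum, Finset.sum_comm (s := univ)]
  simp only [Finset.sum_const, Finset.card_range, nsmul_eq_mul]
  ring
end

section
/- Consider M users and N clusters with a fixed assignment c(m) of user m to a cluster, cluster sets C_i = {m : c(m)=i}, weights α^c_m ∈ [0,1] with Σ_{m∈C_i} α^c_m = 1 for each i, α_{c_i} ∈ [0,1] with Σ_i α_{c_i} = 1, and α_m := α^c_m α_{c(m)}. Let μ_m^τ ∈ ℝ^d with ‖μ_m^τ‖ ≤ G, and on a probability space let X_m^τ be random vectors with E[X_m^τ] = μ_m^τ and E‖X_m^τ − μ_m^τ‖² ≤ σ², and B_m^τ be {0,1}-valued Bernoulli variables with P(B_m^τ = 1) = p, with the pairs (X_m^τ, B_m^τ) mutually independent over all (m, τ) and each B_m^τ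 independent of X_m^τ. Then for any integer κ ≥ 1: Σ_{i=1}^{N} α_{c_i} · E‖ Σ_{τ=0}^{κ−1} ( Σ_{m∈C_i} α^c_m (B_m^τ X_m^τ − p μ_m^τ) − Σ_{m=1}^{M} α_m (B_m^τ X_m^τ − p μ_m^τ) ) ‖² ≤ κ · p (σ² + (1 − p) G²) · Σ_{m=1}^{M} α_m (α^c_m − α_m). -/
open MeasureTheory ProbabilityTheory Finset

lemma aux_integrable_inner {d : ℕ} {Ω : Type*} [MeasurableSpace Ω] {μ : Measure Ω}
    {Y Z : Ω → EuclideanSpace ℝ (Fin d)} (hY : MemLp Y 2 μ) (hZ : MemLp Z 2 μ) :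
    Integrable (fun ω => inner ℝ (Y ω) (Z ω)) μ := by
  refine (MemLp.integrable_mul hY.norm hZ.norm).mono
    (hY.aestronglyMeasurable.inner hZ.aestronglyMeasurable) (Filter.Eventually.of_forall ?_)
  intro ω
  simpa using norm_inner_le_norm (𝕜 := ℝ) (Y ω) (Z ω)

lemma aux_sum_sq_s11 {d : ℕ} {Ω : Type*} [MeasurableSpace Ω] {μ : Measure Ω}
    {ι : Type*} [Fintype ι] (Y : ι → Ω → EuclideanSpace ℝ (Fin d)) (w : ι → ℝ)
    (hY : ∀ q, MemLp (Y q) 2 μ)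
    (horth : ∀ q r, q ≠ r → ∫ ω, inner ℝ (Y q ω) (Y r ω) ∂μ = 0) :
    ∫ ω, ‖∑ q, w q • Y q ω‖ ^ 2 ∂μ = ∑ q, w q ^ 2 * ∫ ω, ‖Y q ω‖ ^ 2 ∂μ := by
  classical
  have h1 : ∀ ω, ‖∑ q, w q • Y q ω‖ ^ 2
      = ∑ q, ∑ r, (w q * w r) * inner ℝ (Y q ω) (Y r ω) := by
    intro ω
    rw [← real_inner_self_eq_norm_sq, sum_inner]
    refine Finset.sum_congr rfl fun q _ => ?_
    rw [inner_sum]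
    refine Finset.sum_congr rfl fun r _ => ?_
    rw [real_inner_smul_left, real_inner_smul_right, mul_assoc]
  have hint : ∀ q r, Integrable (fun ω => (w q * w r) * inner ℝ (Y q ω) (Y r ω)) μ :=
    fun q r => (aux_integrable_inner (hY q) (hY r)).const_mul _
  simp_rw [h1]
  rw [integral_finsetSum _ fun q _ => integrable_finsetSum _ fun r _ => hint q r]
  refine Finset.sum_congr rfl fun q _ => ?_
  rw [integral_finsetSum _ fun r _ => hint q r, Finset.sum_eq_single q]
  · rw [integral_const_mul]
    simp_rw [real_inner_self_eq_norm_sq]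
    ring
  · intro r _ hr
    rw [integral_const_mul, horth q r hr.symm, mul_zero]
  · simp

lemma aux_var {d : ℕ} {Ω : Type*} [MeasurableSpace Ω] {μ : Measure Ω} [IsProbabilityMeasure μ]
    (X : Ω → EuclideanSpace ℝ (Fin d)) (B : Ω → ℝ) (u : EuclideanSpace ℝ (Fin d))
    (σ G p : ℝ) (hp0 : 0 ≤ p) (hp1 : p ≤ 1) (hG : ‖u‖ ≤ G)
    (hX : MemLp X 2 μ) (hm : ∫ ω, X ω ∂μ = u) (hv : ∫ ω, ‖X ω - u‖ ^ 2 ∂μ ≤ σ ^ 2)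
    (hB01 : ∀ ω, B ω = 0 ∨ B ω = 1) (hB : Measurable B) (hBint : ∫ ω, B ω ∂μ = p)
    (hBX : IndepFun B X μ) :
    ∫ ω, ‖B ω • X ω - p • u‖ ^ 2 ∂μ ≤ p * (σ ^ 2 + (1 - p) * G ^ 2) := by
  have hXi : Integrable X μ := hX.integrable (by norm_num)
  have hX2 : Integrable (fun ω => ‖X ω‖ ^ 2) μ := hX.integrable_norm_pow (by norm_num)
  have hXu : Integrable (fun ω => inner ℝ u (X ω)) μ := hXi.const_inner u
  have hEu : ∫ ω, inner ℝ u (X ω) ∂μ = ‖u‖ ^ 2 := by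
    rw [integral_inner hXi, hm, real_inner_self_eq_norm_sq]
  have hf : Integrable (fun ω => ‖X ω‖ ^ 2 - 2 * p * inner ℝ u (X ω)) μ :=
    hX2.sub (hXu.const_mul _)
  have e1 : ∫ ω, ‖X ω - u‖ ^ 2 ∂μ = ∫ ω, ‖X ω‖ ^ 2 ∂μ - ‖u‖ ^ 2 := by
    have : ∀ ω, ‖X ω - u‖ ^ 2 = (‖X ω‖ ^ 2 - 2 * inner ℝ u (X ω)) + ‖u‖ ^ 2 := by
      intro ω
      rw [norm_sub_sq_real, real_inner_comm]
    have hg : Integrable (fun ω => ‖X ω‖ ^ 2 - 2 * inner ℝ u (X ω)) μ :=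
      hX2.sub (hXu.const_mul _)
    simp_rw [this]
    rw [integral_add hg (integrable_const _),
      integral_sub hX2 (hXu.const_mul _), integral_const_mul, hEu]
    simp
    ring
  have e2 : ∫ ω, ‖B ω • X ω - p • u‖ ^ 2 ∂μ
      = p * (∫ ω, ‖X ω‖ ^ 2 ∂μ - 2 * p * ‖u‖ ^ 2) + p ^ 2 * ‖u‖ ^ 2 := by
    have : ∀ ω, ‖B ω • X ω - p • u‖ ^ 2
        = B ω * (‖X ω‖ ^ 2 - 2 * p * inner ℝ u (X ω)) + p ^ 2 * ‖u‖ ^ 2 := by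
      intro ω
      rw [norm_sub_sq_real, real_inner_smul_left, real_inner_smul_right, norm_smul, norm_smul,
        real_inner_comm, mul_pow, mul_pow, Real.norm_eq_abs, Real.norm_eq_abs, sq_abs, sq_abs]
      rcases hB01 ω with h | h <;> rw [h] <;> ring
    simp_rw [this]
    have hind : IndepFun B (fun ω => ‖X ω‖ ^ 2 - 2 * p * inner ℝ u (X ω)) μ := by
      have hφ : Measurable (fun x : EuclideanSpace ℝ (Fin d) =>
          ‖x‖ ^ 2 - 2 * p * inner ℝ u x) := by fun_prop
      exact hBX.comp measurable_id hφ
    have hBf : Integrable (fun ω => B ω * (‖X ω‖ ^ 2 - 2 * p * inner ℝ u (X ω))) μ := by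
      refine hf.bdd_mul (c := 1) hB.aestronglyMeasurable (Filter.Eventually.of_forall fun ω => ?_)
      rcases hB01 ω with h | h <;> simp [h]
    rw [integral_add hBf (integrable_const _),
      hind.integral_fun_mul_eq_mul_integral hB.aestronglyMeasurable hf.aestronglyMeasurable,
      integral_sub hX2 (hXu.const_mul _), integral_const_mul, hEu, hBint]
    simp
  have hsq : ‖u‖ ^ 2 ≤ G ^ 2 := pow_le_pow_left₀ (norm_nonneg _) hG 2
  rw [e2]
  rw [e1] at hv
  have h3 := mul_le_mul_of_nonneg_left hsq (mul_nonneg hp0 (sub_nonneg.2 hp1))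
  have h4 := mul_le_mul_of_nonneg_left hv hp0
  nlinarith

/-- For independent pairs `(X m τ, B m τ)` with `E[X m τ] = μs m τ`,
`‖μs m τ‖ ≤ G`, variance at most `σ²`, and `B m τ` Bernoulli(p) independent of `X m τ`,
the weighted mean-square deviation of the centered indicator-weighted `κ`-step sums of the
cluster averages from the global averages is at most
`κ p (σ² + (1 − p) G²) Σ_m α_m (α^c_m − α_m)`. -/
theorem cluster_vs_global_centered_sum_bound
    {d M N κ : ℕ} (hκ : 1 ≤ κ) (c : Fin M → Fin N)
    (αc : Fin M → ℝ) (αC : Fin N → ℝ) (α : Fin M → ℝ)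
    (hαc01 : ∀ m, αc m ∈ Set.Icc (0 : ℝ) 1)
    (hαcsum : ∀ i, ∑ m ∈ univ.filter (fun m => c m = i), αc m = 1)
    (hαC01 : ∀ i, αC i ∈ Set.Icc (0 : ℝ) 1)
    (hαCsum : ∑ i, αC i = 1)
    (hα : ∀ m, α m = αc m * αC (c m))
    {Ω : Type*} [MeasurableSpace Ω] {μ : Measure Ω} [IsProbabilityMeasure μ]
    (X : Fin M → Fin κ → Ω → EuclideanSpace ℝ (Fin d))
    (B : Fin M → Fin κ → Ω → ℝ)
    (μs : Fin M → Fin κ → EuclideanSpace ℝ (Fin d))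
    (σ G p : ℝ) (hp0 : 0 ≤ p) (hp1 : p ≤ 1)
    (hμsG : ∀ m τ, ‖μs m τ‖ ≤ G)
    (hXsq : ∀ m τ, MemLp (X m τ) 2 μ)
    (hXmean : ∀ m τ, ∫ ω, X m τ ω ∂μ = μs m τ)
    (hXvar : ∀ m τ, ∫ ω, ‖X m τ ω - μs m τ‖ ^ 2 ∂μ ≤ σ ^ 2)
    (hB01 : ∀ m τ ω, B m τ ω = 0 ∨ B m τ ω = 1)
    (hBmeas : ∀ m τ, Measurable (B m τ))
    (hBp : ∀ m τ, μ {ω | B m τ ω = 1} = ENNReal.ofReal p)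
    (hpairs : iIndepFun
      (fun q : Fin M × Fin κ => fun ω => (X q.1 q.2 ω, B q.1 q.2 ω)) μ)
    (hBX : ∀ m τ, IndepFun (B m τ) (X m τ) μ) :
    ∑ i, αC i *
        ∫ ω, ‖∑ τ, ((∑ m ∈ univ.filter (fun m => c m = i),
              αc m • (B m τ ω • X m τ ω - p • μs m τ)) -
            ∑ m, α m • (B m τ ω • X m τ ω - p • μs m τ))‖ ^ 2 ∂μ ≤
      (κ : ℝ) * p * (σ ^ 2 + (1 - p) * G ^ 2) * ∑ m, α m * (αc m - α m) := by
  classical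
  have hBint : ∀ m τ, ∫ ω, B m τ ω ∂μ = p := by
    intro m τ
    have h1 : B m τ = Set.indicator {ω | B m τ ω = 1} (fun _ => (1 : ℝ)) := by
      funext ω
      rcases hB01 m τ ω with h | h <;> simp [Set.indicator, h]
    have hms : MeasurableSet {ω | B m τ ω = 1} := hBmeas m τ (measurableSet_singleton 1)
    rw [h1, integral_indicator hms, setIntegral_const]
    simp [Measure.real, hBp m τ, hp0]
  set Y : Fin M × Fin κ → Ω → EuclideanSpace ℝ (Fin d) :=
    fun q ω => B q.1 q.2 ω • X q.1 q.2 ω - p • μs q.1 q.2 with hYdef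
  have hBXL : ∀ q : Fin M × Fin κ, MemLp (fun ω => B q.1 q.2 ω • X q.1 q.2 ω) 2 μ := by
    intro q
    refine (hXsq q.1 q.2).mono
      ((hBmeas q.1 q.2).aestronglyMeasurable.smul (hXsq q.1 q.2).aestronglyMeasurable)
      (Filter.Eventually.of_forall fun ω => ?_)
    rcases hB01 q.1 q.2 ω with h | h <;> simp [h]
  have hYL : ∀ q, MemLp (Y q) 2 μ := fun q => (hBXL q).sub (memLp_const _)
  have hYi : ∀ q, Integrable (Y q) μ := fun q => (hYL q).integrable (by norm_num)
  have hY0 : ∀ q, ∫ ω, Y q ω ∂μ = 0 := by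
    intro q
    simp only [hYdef]
    rw [integral_sub ((hBXL q).integrable (by norm_num)) (integrable_const _),
      (hBX q.1 q.2).integral_fun_smul_eq_smul_integral (hBmeas _ _).aestronglyMeasurable
        (hXsq _ _).aestronglyMeasurable, hBint, hXmean]
    simp
  have horth : ∀ q r, q ≠ r → ∫ ω, inner ℝ (Y q ω) (Y r ω) ∂μ = 0 := by
    intro q r hqr
    have hφ : ∀ q : Fin M × Fin κ, Measurable (fun z : EuclideanSpace ℝ (Fin d) × ℝ =>
        z.2 • z.1 - p • μs q.1 q.2) := by
      intro q
      fun_prop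
    have hind : IndepFun (Y q) (Y r) μ := (hpairs.indepFun hqr).comp (hφ q) (hφ r)
    have h : ∫ ω, inner ℝ (Y q ω) (Y r ω) ∂μ
        = inner ℝ (∫ ω, Y q ω ∂μ) (∫ ω, Y r ω ∂μ) :=
      hind.integral_bilin (hYi q) (hYi r) (innerSL ℝ)
    rw [h, hY0, hY0]
    simp
  have hvar : ∀ q, ∫ ω, ‖Y q ω‖ ^ 2 ∂μ ≤ p * (σ ^ 2 + (1 - p) * G ^ 2) := fun q =>
    aux_var _ _ _ σ G p hp0 hp1 (hμsG _ _) (hXsq _ _) (hXmean _ _) (hXvar _ _) (hB01 _ _)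
      (hBmeas _ _) (hBint _ _) (hBX _ _)
  set V := p * (σ ^ 2 + (1 - p) * G ^ 2) with hV
  set w : Fin N → Fin M → ℝ := fun i m => (if c m = i then αc m else 0) - α m with hw
  have hint : ∀ i, ∫ ω, ‖∑ τ, ((∑ m ∈ univ.filter (fun m => c m = i),
              αc m • (B m τ ω • X m τ ω - p • μs m τ)) -
            ∑ m, α m • (B m τ ω • X m τ ω - p • μs m τ))‖ ^ 2 ∂μ
      ≤ κ * V * ∑ m, w i m ^ 2 := by
    intro i
    have h1 : ∀ ω, ∑ τ, ((∑ m ∈ univ.filter (fun m => c m = i),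
              αc m • (B m τ ω • X m τ ω - p • μs m τ)) -
            ∑ m, α m • (B m τ ω • X m τ ω - p • μs m τ))
        = ∑ q : Fin M × Fin κ, w i q.1 • Y q ω := by
      intro ω
      rw [Fintype.sum_prod_type, Finset.sum_comm]
      refine Finset.sum_congr rfl fun τ _ => ?_
      rw [Finset.sum_filter, ← Finset.sum_sub_distrib]
      refine Finset.sum_congr rfl fun m _ => ?_
      simp only [hw, hYdef, sub_smul, ite_smul, zero_smul]
    rw [integral_congr_ae (Filter.Eventually.of_forall fun ω =>
      congrArg (fun v => ‖v‖ ^ 2) (h1 ω))]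
    rw [aux_sum_sq_s11 Y (fun q => w i q.1) hYL horth]
    calc ∑ q : Fin M × Fin κ, w i q.1 ^ 2 * ∫ ω, ‖Y q ω‖ ^ 2 ∂μ
        ≤ ∑ q : Fin M × Fin κ, w i q.1 ^ 2 * V :=
          Finset.sum_le_sum fun q _ => mul_le_mul_of_nonneg_left (hvar q) (sq_nonneg _)
      _ = κ * V * ∑ m, w i m ^ 2 := by
          rw [Fintype.sum_prod_type, Finset.mul_sum]
          refine Finset.sum_congr rfl fun m _ => ?_
          simp
          ring
  calc _ ≤ ∑ i, αC i * (κ * V * ∑ m, w i m ^ 2) :=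
        Finset.sum_le_sum fun i _ => mul_le_mul_of_nonneg_left (hint i) (hαC01 i).1
    _ = κ * V * ∑ m, ∑ i, αC i * w i m ^ 2 := by
        rw [Finset.sum_comm, Finset.mul_sum]
        refine Finset.sum_congr rfl fun i _ => ?_
        rw [← Finset.mul_sum]
        ring
    _ = _ := by
        rw [hV, ← mul_assoc]
        congr 1
        refine Finset.sum_congr rfl fun m _ => ?_
        have h2 : ∀ i, αC i * w i m ^ 2
            = (if c m = i then αC i * (αc m ^ 2 - 2 * αc m * α m) else 0) + αC i * α m ^ 2 := by
          intro i
          simp only [hw]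
          split_ifs <;> ring
        simp_rw [h2]
        rw [Finset.sum_add_distrib, Finset.sum_ite_eq, ← Finset.sum_mul, hαCsum]
        simp only [Finset.mem_univ, if_true]
        rw [hα m]
        ring
end

section
/- Under the MACFL setup (full participation, weights β), if the learning rate satisfies η < 1/(√12 · L · κ₁), then the time-averaged weighted mean-square deviation between local models and their averaged cluster models is bounded as (1/T)·Σ_{t=0}^{T−1} Σ_{m=1}^{M} β_m E‖w_m^t − w̄_{c(m)}^t‖² ≤ (2 η² κ₁/(1 − 12 η² L² κ₁²)) · ( 3 κ₁ ε_{M,c}² + σ_M² Σ_{m=1}^{M} β_m (1 − β^c_m) ). -/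
open MeasureTheory ProbabilityTheory Finset

theorem macfl_real_claim (A G : ℕ → ℝ) (K : ℕ) (hK : 0 < K) (e V : ℝ) (he : 0 ≤ e) (hV : 0 ≤ V)
    (h0 : A 0 = 0)
    (hstep : ∀ s, s + 1 < K → ∀ α : ℝ, 0 < α →
      A (s + 1) ≤ (1 + α) * A s + (1 + 1 / α) * (e * G s) + e * V) :
    ∀ s, s < K → A s ≤ e * (K + s) * (∑ r ∈ range s, G r + s * V / K) := by
  have hK' : (0 : ℝ) < K := by exact_mod_cast hK
  intro s
  induction s with
  | zero => intro _; simp [h0]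
  | succ s ih =>
    intro hs
    have ih' := ih (by omega)
    have hpos : (0 : ℝ) < K + s := by positivity
    have h := hstep s hs (1 / (K + s)) (by positivity)
    have h1 : (1 + 1 / ((K : ℝ) + s)) * A s ≤
        e * (K + s + 1) * (∑ r ∈ range s, G r + s * V / K) := by
      calc (1 + 1 / ((K : ℝ) + s)) * A s
          ≤ (1 + 1 / ((K : ℝ) + s)) * (e * (K + s) * (∑ r ∈ range s, G r + s * V / K)) := by
            gcongr
        _ = _ := by field_simp
    have h2 : (1 + 1 / (1 / ((K : ℝ) + s))) = K + s + 1 := by field_simp; ring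
    rw [h2] at h
    have h3 : e * V ≤ e * (K + s + 1) * (V / K) := by
      have : V ≤ (K + s + 1) * (V / K) := by
        have h4 : V = K * (V / K) := by field_simp
        have h5 : 0 ≤ V / K := by positivity
        have h6 : (0 : ℝ) ≤ s := by positivity
        nlinarith
      calc e * V ≤ e * ((K + s + 1) * (V / K)) := by gcongr
        _ = _ := by ring
    rw [sum_range_succ]
    push_cast
    calc A (s + 1) ≤ e * (K + s + 1) * (∑ r ∈ range s, G r + s * V / K)
          + (K + s + 1) * (e * G s) + e * (K + s + 1) * (V / K) := by linarith
      _ = _ := by ring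

theorem macfl_real_period (A : ℕ → ℝ) (K : ℕ) (hK : 0 < K) (e V L2 ε2 : ℝ) (he : 0 ≤ e)
    (hV : 0 ≤ V) (hL2 : 0 ≤ L2) (hε2 : 0 ≤ ε2)
    (hA : ∀ s, 0 ≤ A s) (h0 : A 0 = 0)
    (hstep : ∀ s, s + 1 < K → ∀ α : ℝ, 0 < α →
      A (s + 1) ≤ (1 + α) * A s + (1 + 1 / α) * (e * (2 * L2 * A s + 2 * ε2)) + e * V)
    (τ : ℕ) (hτ : τ ≤ K) :
    (1 - 12 * e * L2 * (K : ℝ) ^ 2) * ∑ s ∈ range τ, A s ≤ τ * (e * K * (6 * K * ε2 + V)) := by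
  have hK' : (0 : ℝ) < K := by exact_mod_cast hK
  have hτ' : (τ : ℝ) ≤ K := by exact_mod_cast hτ
  have hτ0 : (0 : ℝ) ≤ τ := by positivity
  have hcl := macfl_real_claim A (fun s => 2 * L2 * A s + 2 * ε2) K hK e V he hV h0 hstep
  set S := ∑ s ∈ range τ, A s with hS
  have hS0 : 0 ≤ S := sum_nonneg fun s _ => hA s
  have hb : ∀ s ∈ range τ, A s ≤ e * (2 * K * (2 * L2 * S + 2 * ε2 * τ)) + e * V * (2 * s) := by
    intro s hs
    have hs' : s < τ := mem_range.1 hs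
    have hsK : (s : ℝ) ≤ K := by exact_mod_cast (by omega : s ≤ K)
    have h1 := hcl s (by omega)
    have h2 : ∑ r ∈ range s, (2 * L2 * A r + 2 * ε2) ≤ 2 * L2 * S + 2 * ε2 * τ := by
      calc ∑ r ∈ range s, (2 * L2 * A r + 2 * ε2) ≤ ∑ r ∈ range τ, (2 * L2 * A r + 2 * ε2) := by
            apply sum_le_sum_of_subset_of_nonneg
            · intro x hx; simp at hx ⊢; omega
            · intro r _ _; have := hA r; positivity
        _ = _ := by rw [sum_add_distrib, ← mul_sum]; simp; ring
    have h3 : (s : ℝ) * V / K = s * (V / K) := by ring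
    calc A s ≤ e * (K + s) * (∑ r ∈ range s, (2 * L2 * A r + 2 * ε2) + s * V / K) := h1
      _ ≤ e * (K + K) * ((2 * L2 * S + 2 * ε2 * τ) + s * V / K) := by
          have h4 : 0 ≤ ∑ r ∈ range s, (2 * L2 * A r + 2 * ε2) :=
            sum_nonneg fun r _ => by have := hA r; positivity
          gcongr
      _ = _ := by field_simp; ring
  have hsum := sum_le_sum hb
  rw [← hS, sum_add_distrib] at hsum
  have hg : ∀ n : ℕ, ∑ s ∈ range n, (s : ℝ) = n * (n - 1) / 2 := by
    intro n
    induction n with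
    | zero => simp
    | succ n ih => rw [sum_range_succ, ih]; push_cast; ring
  rw [← mul_sum (f := fun s : ℕ => 2 * (s : ℝ)), ← mul_sum (f := fun s : ℕ => (s : ℝ)), hg] at hsum
  simp only [sum_const, card_range, nsmul_eq_mul] at hsum
  have h1 : (τ : ℝ) * (e * (2 * K * (2 * L2 * S + 2 * ε2 * τ))) ≤
      4 * e * L2 * K ^ 2 * S + τ * (e * K * (4 * K * ε2)) := by
    have ha : (τ : ℝ) * (e * K * L2 * S) ≤ K * (e * K * L2 * S) := by gcongr
    have hb : (τ : ℝ) * (e * K * ε2 * τ) ≤ K * (e * K * ε2 * τ) := by gcongr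
    nlinarith
  have h2 : e * V * (2 * ((τ : ℝ) * (τ - 1) / 2)) ≤ τ * (e * K * V) := by
    have : (τ - 1 : ℝ) ≤ K := by linarith
    have : e * V * τ * (τ - 1) ≤ e * V * τ * K := by gcongr
    linarith
  have h3 : 0 ≤ e * L2 * K ^ 2 * S := by positivity
  have h4 : 0 ≤ τ * (e * K * (K * ε2)) := by positivity
  nlinarith

theorem macfl_real_total (A : ℕ → ℝ) (K : ℕ) (hK : 0 < K) (e V L2 ε2 : ℝ) (he : 0 ≤ e)
    (hV : 0 ≤ V) (hL2 : 0 ≤ L2) (hε2 : 0 ≤ ε2)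
    (hA : ∀ s, 0 ≤ A s) (h0 : ∀ t, K ∣ t → A t = 0)
    (hstep : ∀ s, ¬ K ∣ s + 1 → ∀ α : ℝ, 0 < α →
      A (s + 1) ≤ (1 + α) * A s + (1 + 1 / α) * (e * (2 * L2 * A s + 2 * ε2)) + e * V)
    (T : ℕ) :
    (1 - 12 * e * L2 * (K : ℝ) ^ 2) * ∑ s ∈ range T, A s ≤ T * (e * K * (6 * K * ε2 + V)) := by
  have hper : ∀ q τ, τ ≤ K → (1 - 12 * e * L2 * (K : ℝ) ^ 2) * ∑ s ∈ range τ, A (K * q + s) ≤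
      τ * (e * K * (6 * K * ε2 + V)) := by
    intro q τ hτ
    refine macfl_real_period (fun s => A (K * q + s)) K hK e V L2 ε2 he hV hL2 hε2
      (fun s => hA _) (h0 _ (by simp)) ?_ τ hτ
    intro s hs α hα
    refine hstep (K * q + s) ?_ α hα
    rw [add_assoc, Nat.dvd_add_right (Dvd.intro _ rfl)]
    exact fun h => absurd (Nat.le_of_dvd (by omega) h) (by omega)
  have hq : ∀ q : ℕ, (1 - 12 * e * L2 * (K : ℝ) ^ 2) * ∑ s ∈ range (K * q), A s ≤
      ((K * q : ℕ) : ℝ) * (e * K * (6 * K * ε2 + V)) := by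
    intro q
    induction q with
    | zero => simp
    | succ q ih =>
      rw [Nat.mul_succ, sum_range_add, mul_add]
      have := hper q K le_rfl
      push_cast at ih ⊢
      linarith
  have h1 := hq (T / K)
  have h2 := hper (T / K) (T % K) (Nat.mod_lt _ hK).le
  have h3 : T = K * (T / K) + T % K := (Nat.div_add_mod T K).symm
  have h4 : (T : ℝ) = ((K * (T / K) : ℕ) : ℝ) + ((T % K : ℕ) : ℝ) := by exact_mod_cast h3
  have h5 : ∑ s ∈ range T, A s =
      ∑ s ∈ range (K * (T / K)), A s + ∑ s ∈ range (T % K), A (K * (T / K) + s) := by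
    rw [← sum_range_add, ← h3]
  rw [h5, h4]
  linarith

section vec
variable {ι E : Type*} [NormedAddCommGroup E] [InnerProductSpace ℝ E]

theorem macfl_var_le (s : Finset ι) (p : ι → ℝ) (hp1 : ∑ j ∈ s, p j = 1) (x : ι → E) (z : E) :
    ∑ j ∈ s, p j * ‖x j - ∑ k ∈ s, p k • x k‖ ^ 2 ≤ ∑ j ∈ s, p j * ‖x j - z‖ ^ 2 := by
  set b := ∑ k ∈ s, p k • x k with hb
  have h : ∀ j, p j * ‖x j - z‖ ^ 2 = p j * ‖x j - b‖ ^ 2 +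
      2 * inner ℝ (p j • x j - p j • b) (b - z) + p j * ‖b - z‖ ^ 2 := by
    intro j
    have : x j - z = (x j - b) + (b - z) := by abel
    rw [this, norm_add_sq_real, ← smul_sub, real_inner_smul_left]
    ring
  rw [sum_congr rfl fun j _ => h j, sum_add_distrib, sum_add_distrib, ← mul_sum, ← sum_inner,
    sum_sub_distrib, ← sum_smul, ← sum_mul, hp1, ← hb]
  simp

theorem macfl_var_pair (s : Finset ι) (p : ι → ℝ) (hp0 : ∀ j ∈ s, 0 ≤ p j)
    (hp1 : ∑ j ∈ s, p j = 1) (x : ι → E) :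
    ∑ j ∈ s, p j * ‖x j - ∑ k ∈ s, p k • x k‖ ^ 2 ≤
      2 * ∑ j ∈ s, p j * (1 - p j) * ‖x j‖ ^ 2 := by
  classical
  set b := ∑ k ∈ s, p k • x k with hb
  -- the variance is half the double sum
  have h1 : ∑ j ∈ s, p j * ‖x j - b‖ ^ 2 = ∑ j ∈ s, p j * ‖x j‖ ^ 2 - ‖b‖ ^ 2 := by
    have : ∀ j, p j * ‖x j - b‖ ^ 2 = p j * ‖x j‖ ^ 2 - 2 * inner ℝ (p j • x j) b
        + p j * ‖b‖ ^ 2 := by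
      intro j
      rw [norm_sub_sq_real, real_inner_smul_left]; ring
    rw [sum_congr rfl fun j _ => this j, sum_add_distrib, sum_sub_distrib, ← mul_sum, ← sum_inner,
      ← sum_mul, hp1, ← hb, real_inner_self_eq_norm_sq]
    ring
  have h2 : ‖b‖ ^ 2 = ∑ j ∈ s, ∑ k ∈ s, p j * p k * inner ℝ (x j) (x k) := by
    rw [← real_inner_self_eq_norm_sq, hb, sum_inner]
    refine sum_congr rfl fun j _ => ?_
    rw [inner_sum]
    refine sum_congr rfl fun k _ => ?_
    rw [real_inner_smul_left, real_inner_smul_right]; ring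
  -- lower bound for the norm of the mean
  have h3 : ∑ j ∈ s, ∑ k ∈ s, (p j * p k * (-(‖x j‖ ^ 2 + ‖x k‖ ^ 2) / 2) +
      if j = k then 2 * p j * p j * ‖x j‖ ^ 2 else 0) ≤ ‖b‖ ^ 2 := by
    rw [h2]
    refine sum_le_sum fun j hj => sum_le_sum fun k hk => ?_
    by_cases hjk : j = k
    · subst hjk
      rw [if_pos rfl, real_inner_self_eq_norm_sq]
      apply le_of_eq; ring
    · rw [if_neg hjk, add_zero]
      have := norm_add_sq_real (x j) (x k)
      have h4 : 0 ≤ ‖x j + x k‖ ^ 2 := by positivity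
      have := mul_nonneg (hp0 j hj) (hp0 k hk)
      gcongr
      linarith
  have h4 : ∑ j ∈ s, ∑ k ∈ s, (p j * p k * (-(‖x j‖ ^ 2 + ‖x k‖ ^ 2) / 2) +
      if j = k then 2 * p j * p j * ‖x j‖ ^ 2 else 0) =
      - ∑ j ∈ s, p j * ‖x j‖ ^ 2 + 2 * ∑ j ∈ s, p j * p j * ‖x j‖ ^ 2 := by
    have : ∀ j ∈ s, ∑ k ∈ s, (p j * p k * (-(‖x j‖ ^ 2 + ‖x k‖ ^ 2) / 2) +
      if j = k then 2 * p j * p j * ‖x j‖ ^ 2 else 0) =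
        -(1 / 2) * (p j * ‖x j‖ ^ 2) - (1 / 2) * (p j * ∑ k ∈ s, p k * ‖x k‖ ^ 2)
          + 2 * (p j * p j * ‖x j‖ ^ 2) := by
      intro j hj
      rw [sum_add_distrib, sum_ite_eq, if_pos hj]
      have : ∀ k, p j * p k * (-(‖x j‖ ^ 2 + ‖x k‖ ^ 2) / 2) =
          (-(1 / 2) * (p j * ‖x j‖ ^ 2)) * p k - (1 / 2 * p j) * (p k * ‖x k‖ ^ 2) := by
        intro k; ring
      rw [sum_congr rfl fun k _ => this k, sum_sub_distrib, ← mul_sum, ← mul_sum, hp1]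
      ring
    rw [sum_congr rfl this, sum_add_distrib, sum_sub_distrib, ← mul_sum, ← mul_sum, ← mul_sum,
      ← sum_mul, hp1]
    ring
  have h5 : ∑ j ∈ s, p j * (1 - p j) * ‖x j‖ ^ 2 =
      ∑ j ∈ s, p j * ‖x j‖ ^ 2 - ∑ j ∈ s, p j * p j * ‖x j‖ ^ 2 := by
    rw [← sum_sub_distrib]; exact sum_congr rfl fun j _ => by ring
  rw [h1, h5]
  linarith

theorem macfl_young (x y : E) (α : ℝ) (hα : 0 < α) :
    ‖x - y‖ ^ 2 ≤ (1 + α) * ‖x‖ ^ 2 + (1 + 1 / α) * ‖y‖ ^ 2 := by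
  have h1 : ‖x - y‖ ≤ ‖x‖ + ‖y‖ := norm_sub_le _ _
  have h2 : ‖x - y‖ ^ 2 ≤ (‖x‖ + ‖y‖) ^ 2 := by gcongr
  have h3 : 0 ≤ (α * ‖x‖ - ‖y‖) ^ 2 / α := by positivity
  have h4 : (α * ‖x‖ - ‖y‖) ^ 2 / α = α * ‖x‖ ^ 2 - 2 * ‖x‖ * ‖y‖ + 1 / α * ‖y‖ ^ 2 := by
    field_simp
    ring
  nlinarith

variable {Ω : Type*} {m : MeasurableSpace Ω} [m0 : MeasurableSpace Ω] {μ : Measure Ω} [IsProbabilityMeasure μ]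

theorem macfl_int_sq {u : Ω → E} (hu : MemLp u 2 μ) : Integrable (fun ω => ‖u ω‖ ^ 2) μ := by
  have := hu.integrable_norm_pow (p := 2) (by norm_num)
  exact this

theorem macfl_orth [CompleteSpace E] (hm : m ≤ m0) {u v : Ω → E}
    (hum : StronglyMeasurable[m] u) (hu : MemLp u 2 μ) (hv : MemLp v 2 μ)
    (hv0 : μ[v | m] =ᵐ[μ] 0) (η : ℝ) :
    ∫ ω, ‖u ω - η • v ω‖ ^ 2 ∂μ = ∫ ω, ‖u ω‖ ^ 2 ∂μ + η ^ 2 * ∫ ω, ‖v ω‖ ^ 2 ∂μ := by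
  have hui := macfl_int_sq hu
  have hvi := macfl_int_sq hv
  have huv : Integrable (fun ω => inner ℝ (u ω) (v ω)) μ := by
    have h1 := macfl_int_sq (hu.add hv)
    have := ((h1.sub hui).sub hvi).div_const 2
    refine this.congr (Filter.Eventually.of_forall fun ω => ?_)
    have := norm_add_sq_real (u ω) (v ω)
    simp only [Pi.sub_apply, Pi.add_apply]
    linarith
  have h0 : ∫ ω, inner ℝ (u ω) (v ω) ∂μ = 0 := by
    have h := condExp_bilin_of_stronglyMeasurable_left (μ := μ) (innerSL ℝ (E := E)) hum
      huv (hv.integrable (by norm_num))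
    rw [← integral_condExp hm (μ := μ)]
    have : μ[fun ω => inner ℝ (u ω) (v ω) | m] =ᵐ[μ] 0 := by
      refine Filter.EventuallyEq.trans h ?_
      filter_upwards [hv0] with ω hω
      simp [hω]
    rw [integral_congr_ae this]
    simp
  have h : ∀ ω, ‖u ω - η • v ω‖ ^ 2 =
      ‖u ω‖ ^ 2 - 2 * η * inner ℝ (u ω) (v ω) + η ^ 2 * ‖v ω‖ ^ 2 := by
    intro ω
    rw [norm_sub_sq_real, real_inner_smul_right, norm_smul, mul_pow, Real.norm_eq_abs, sq_abs]
    ring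
  simp_rw [h]
  have i1 : Integrable (fun ω => ‖u ω‖ ^ 2 - 2 * η * inner ℝ (u ω) (v ω)) μ :=
    hui.sub (huv.const_mul _)
  rw [integral_add i1 (hvi.const_mul _),
    integral_sub hui (huv.const_mul _), integral_const_mul, integral_const_mul, h0]
  ring

theorem macfl_one_step [CompleteSpace E] (hm : m ≤ m0)
    (s : Finset ι) (p : ι → ℝ) (hp0 : ∀ j, 0 ≤ p j) (hp01 : ∀ j, p j ≤ 1)
    (hp1 : ∑ j ∈ s, p j = 1) (D h g : ι → Ω → E)
    (hDm : ∀ j ∈ s, StronglyMeasurable[m] (D j)) (hhm : ∀ j, StronglyMeasurable[m] (h j))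
    (hD : ∀ j ∈ s, MemLp (D j) 2 μ) (hh : ∀ j, MemLp (h j) 2 μ) (hg : ∀ j, MemLp (g j) 2 μ)
    (hgh : ∀ j, μ[g j | m] =ᵐ[μ] h j) (σ2 L2 ε2 η : ℝ)
    (hvar : ∀ j, ∫ ω, ‖g j ω - h j ω‖ ^ 2 ∂μ ≤ σ2)
    (hG : ∀ ω, ∑ j ∈ s, p j * ‖h j ω - ∑ k ∈ s, p k • h k ω‖ ^ 2 ≤
      2 * L2 * ∑ j ∈ s, p j * ‖D j ω‖ ^ 2 + 2 * ε2) (α : ℝ) (hα : 0 < α) :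
    ∑ j ∈ s, p j * ∫ ω, ‖D j ω - η • (g j ω - ∑ k ∈ s, p k • g k ω)‖ ^ 2 ∂μ ≤
      (1 + α) * ∑ j ∈ s, p j * ∫ ω, ‖D j ω‖ ^ 2 ∂μ +
      (1 + 1 / α) * (η ^ 2 * (2 * L2 * ∑ j ∈ s, p j * ∫ ω, ‖D j ω‖ ^ 2 ∂μ + 2 * ε2)) +
      η ^ 2 * (2 * σ2 * ∑ j ∈ s, p j * (1 - p j)) := by
  set v : ι → Ω → E := fun j ω => g j ω - h j ω with hv
  set hb : Ω → E := fun ω => ∑ k ∈ s, p k • h k ω with hhb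
  set vb : Ω → E := fun ω => ∑ k ∈ s, p k • v k ω with hvb
  have hvL : ∀ j, MemLp (v j) 2 μ := fun j => (hg j).sub (hh j)
  have hbL : MemLp hb 2 μ := memLp_finsetSum s fun k _ => (hh k).const_smul (p k)
  have vbL : MemLp vb 2 μ := memLp_finsetSum s fun k _ => (hvL k).const_smul (p k)
  have hbm : StronglyMeasurable[m] hb :=
    Finset.stronglyMeasurable_fun_sum s fun k _ => (hhm k).const_smul (p k)
  have hv0 : ∀ j, μ[v j | m] =ᵐ[μ] 0 := by
    intro j
    have h1 := condExp_sub (m := m) ((hg j).integrable (by norm_num))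
      ((hh j).integrable (by norm_num))
    have h2 := condExp_of_stronglyMeasurable hm (hhm j) ((hh j).integrable (μ := μ) (by norm_num))
    rw [h2] at h1
    refine Filter.EventuallyEq.trans h1 ?_
    filter_upwards [hgh j] with ω hω
    simp [hω]
  have hvb0 : μ[vb | m] =ᵐ[μ] 0 := by
    have h1 : vb = ∑ k ∈ s, p k • v k := by ext1 ω; simp [hvb]
    rw [h1]
    refine (condExp_finsetSum (fun k _ =>
      ((hvL k).const_smul (p k)).integrable (by norm_num)) m).trans ?_
    have h3 : ∀ k ∈ s, μ[p k • v k | m] =ᵐ[μ] 0 := by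
      intro k _
      refine (condExp_smul (p k) (v k) m).trans ?_
      filter_upwards [hv0 k] with ω hω
      simp [hω]
    have h4 : ∀ᵐ ω ∂μ, ∀ k ∈ s, (μ[p k • v k | m]) ω = 0 := by
      rw [Filter.eventually_all_finset]
      exact h3
    filter_upwards [h4] with ω hω
    rw [Finset.sum_apply, Finset.sum_eq_zero hω]; rfl
  have hdec : ∀ j ∈ s, ∫ ω, ‖D j ω - η • (g j ω - ∑ k ∈ s, p k • g k ω)‖ ^ 2 ∂μ =
      ∫ ω, ‖D j ω - η • (h j ω - hb ω)‖ ^ 2 ∂μ + η ^ 2 * ∫ ω, ‖v j ω - vb ω‖ ^ 2 ∂μ := by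
    intro j hj
    rw [← macfl_orth hm (u := fun ω => D j ω - η • (h j ω - hb ω)) (v := fun ω => v j ω - vb ω)
      ((hDm j hj).sub (((hhm j).sub hbm).const_smul η))
      ((hD j hj).sub (((hh j).sub hbL).const_smul η)) ((hvL j).sub vbL) ?_ η]
    · congr 1
      ext1 ω
      have : g j ω - ∑ k ∈ s, p k • g k ω = (h j ω - hb ω) + (v j ω - vb ω) := by
        simp only [hv, hhb, hvb, smul_sub, sum_sub_distrib]
        abel
      rw [this, smul_add, ← sub_sub]
    · have h1 := condExp_sub (m := m) ((hvL j).integrable (by norm_num))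
        (vbL.integrable (by norm_num))
      refine Filter.EventuallyEq.trans h1 ?_
      filter_upwards [hv0 j, hvb0] with ω h2 h3
      simp [h2, h3]
  have hdr : ∀ j ∈ s, ∫ ω, ‖D j ω - η • (h j ω - hb ω)‖ ^ 2 ∂μ ≤
      (1 + α) * ∫ ω, ‖D j ω‖ ^ 2 ∂μ + (1 + 1 / α) * (η ^ 2 * ∫ ω, ‖h j ω - hb ω‖ ^ 2 ∂μ) := by
    intro j hj
    have i1 := macfl_int_sq (hD j hj)
    have i2 := macfl_int_sq ((hh j).sub hbL)
    simp only [Pi.sub_apply] at i2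
    rw [← integral_const_mul, ← integral_const_mul, ← integral_const_mul,
      ← integral_add (i1.const_mul _) ((i2.const_mul _).const_mul _)]
    refine integral_mono (macfl_int_sq ((hD j hj).sub (((hh j).sub hbL).const_smul η)))
      ((i1.const_mul _).add ((i2.const_mul _).const_mul _)) fun ω => ?_
    have := macfl_young (D j ω) (η • (h j ω - hb ω)) α hα
    rw [norm_smul, mul_pow, Real.norm_eq_abs, sq_abs] at this
    exact this
  have hsumh : ∑ j ∈ s, p j * ∫ ω, ‖h j ω - hb ω‖ ^ 2 ∂μ ≤
      2 * L2 * ∑ j ∈ s, p j * ∫ ω, ‖D j ω‖ ^ 2 ∂μ + 2 * ε2 := by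
    have i2 : ∀ j ∈ s, Integrable (fun ω => p j * ‖h j ω - hb ω‖ ^ 2) μ :=
      fun j _ => (macfl_int_sq ((hh j).sub hbL)).const_mul _
    have i1 : ∀ j ∈ s, Integrable (fun ω => p j * ‖D j ω‖ ^ 2) μ :=
      fun j hj => (macfl_int_sq (hD j hj)).const_mul _
    have e1 : ∑ j ∈ s, p j * ∫ ω, ‖h j ω - hb ω‖ ^ 2 ∂μ =
        ∫ ω, ∑ j ∈ s, p j * ‖h j ω - hb ω‖ ^ 2 ∂μ := by
      rw [integral_finsetSum s i2]
      exact sum_congr rfl fun j _ => (integral_const_mul _ _).symm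
    have e2 : ∑ j ∈ s, p j * ∫ ω, ‖D j ω‖ ^ 2 ∂μ =
        ∫ ω, ∑ j ∈ s, p j * ‖D j ω‖ ^ 2 ∂μ := by
      rw [integral_finsetSum s i1]
      exact sum_congr rfl fun j _ => (integral_const_mul _ _).symm
    have i3 := integrable_finsetSum s i1
    have e3 : 2 * L2 * ∫ ω, ∑ j ∈ s, p j * ‖D j ω‖ ^ 2 ∂μ + 2 * ε2 =
        ∫ ω, (2 * L2 * ∑ j ∈ s, p j * ‖D j ω‖ ^ 2 + 2 * ε2) ∂μ := by
      rw [integral_add (i3.const_mul _) (integrable_const _), integral_const_mul]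
      simp
    rw [e1, e2, e3]
    exact integral_mono (integrable_finsetSum s i2) ((i3.const_mul _).add (integrable_const _)) hG
  have hsumv : ∑ j ∈ s, p j * ∫ ω, ‖v j ω - vb ω‖ ^ 2 ∂μ ≤
      2 * σ2 * ∑ j ∈ s, p j * (1 - p j) := by
    have i2 : ∀ j ∈ s, Integrable (fun ω => p j * ‖v j ω - vb ω‖ ^ 2) μ :=
      fun j _ => (macfl_int_sq ((hvL j).sub vbL)).const_mul _
    have i1 : ∀ j ∈ s, Integrable (fun ω => p j * (1 - p j) * ‖v j ω‖ ^ 2) μ :=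
      fun j _ => (macfl_int_sq (hvL j)).const_mul _
    have e1 : ∑ j ∈ s, p j * ∫ ω, ‖v j ω - vb ω‖ ^ 2 ∂μ =
        ∫ ω, ∑ j ∈ s, p j * ‖v j ω - vb ω‖ ^ 2 ∂μ := by
      rw [integral_finsetSum s i2]
      exact sum_congr rfl fun j _ => (integral_const_mul _ _).symm
    calc _ = _ := e1
      _ ≤ ∫ ω, 2 * ∑ j ∈ s, p j * (1 - p j) * ‖v j ω‖ ^ 2 ∂μ :=
        integral_mono (integrable_finsetSum s i2) ((integrable_finsetSum s i1).const_mul _)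
          fun ω => macfl_var_pair s p (fun j _ => hp0 j) hp1 fun j => v j ω
      _ = 2 * ∑ j ∈ s, p j * (1 - p j) * ∫ ω, ‖v j ω‖ ^ 2 ∂μ := by
        rw [integral_const_mul, integral_finsetSum s i1]
        congr 1
        exact sum_congr rfl fun j _ => integral_const_mul _ _
      _ ≤ 2 * ∑ j ∈ s, p j * (1 - p j) * σ2 := by
        gcongr with j hj
        · exact mul_nonneg (hp0 j) (by linarith [hp01 j])
        · exact hvar j
      _ = _ := by rw [← sum_mul]; ring
  calc ∑ j ∈ s, p j * ∫ ω, ‖D j ω - η • (g j ω - ∑ k ∈ s, p k • g k ω)‖ ^ 2 ∂μ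
      ≤ ∑ j ∈ s, p j * ((1 + α) * ∫ ω, ‖D j ω‖ ^ 2 ∂μ +
          (1 + 1 / α) * (η ^ 2 * ∫ ω, ‖h j ω - hb ω‖ ^ 2 ∂μ) +
          η ^ 2 * ∫ ω, ‖v j ω - vb ω‖ ^ 2 ∂μ) := by
        refine sum_le_sum fun j hj => mul_le_mul_of_nonneg_left ?_ (hp0 j)
        rw [hdec j hj]
        linarith [hdr j hj]
    _ = (1 + α) * ∑ j ∈ s, p j * ∫ ω, ‖D j ω‖ ^ 2 ∂μ +
          (1 + 1 / α) * (η ^ 2 * ∑ j ∈ s, p j * ∫ ω, ‖h j ω - hb ω‖ ^ 2 ∂μ) +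
          η ^ 2 * ∑ j ∈ s, p j * ∫ ω, ‖v j ω - vb ω‖ ^ 2 ∂μ := by
        simp only [mul_sum, ← sum_add_distrib]
        exact sum_congr rfl fun j _ => by ring
    _ ≤ _ := by gcongr

end vec



/-- Under the MACFL setup (full participation, weights `β`), for a
learning rate `η < 1/(√12 L κ₁)`, the time-averaged weighted mean-square deviation between
local models and their averaged cluster models is bounded as stated. -/
theorem macfl_local_deviation
    {d : ℕ} {Ω : Type*} [m0 : MeasurableSpace Ω] {μ : Measure Ω} [IsProbabilityMeasure μ]
    {M N : ℕ} (c : Fin M → Fin N)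
    (βc : Fin M → ℝ) (βC : Fin N → ℝ) (β : Fin M → ℝ)
    (hβc01 : ∀ m, βc m ∈ Set.Icc (0 : ℝ) 1)
    (hβcsum : ∀ i, ∑ m ∈ univ.filter (fun m => c m = i), βc m = 1)
    (hβC01 : ∀ i, βC i ∈ Set.Icc (0 : ℝ) 1)
    (hβCsum : ∑ i, βC i = 1)
    (hβ : ∀ m, β m = βc m * βC (c m))
    -- personalized losses
    (Ft : Fin M → EuclideanSpace ℝ (Fin d) → ℝ)
    (fct : Fin N → EuclideanSpace ℝ (Fin d) → ℝ)
    (ft : EuclideanSpace ℝ (Fin d) → ℝ)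
    (hFdiff : ∀ m, Differentiable ℝ (Ft m))
    (hfct : ∀ i x, fct i x = ∑ m ∈ univ.filter (fun m => c m = i), βc m * Ft m x)
    (hft : ∀ x, ft x = ∑ i, βC i * fct i x)
    -- constants
    (L σM εMc η : ℝ) (κ₁ T : ℕ)
    (hκ₁ : 0 < κ₁) (hT : 0 < T)
    (hL : 0 < L) (hη : 0 < η)
    (hηκ : η < 1 / (Real.sqrt 12 * L * κ₁))
    -- assumptions
    (hLip : ∀ m, LipschitzWith L.toNNReal (gradient (Ft m)))
    (hdivc : ∀ i x, ∑ m ∈ univ.filter (fun m => c m = i),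
        βc m * ‖gradient (Ft m) x - gradient (fct i) x‖ ^ 2 ≤ εMc ^ 2)
    -- stochastic processes (full participation)
    (w : Fin M → ℕ → Ω → EuclideanSpace ℝ (Fin d))
    (wc : Fin N → ℕ → Ω → EuclideanSpace ℝ (Fin d))
    (g : Fin M → ℕ → Ω → EuclideanSpace ℝ (Fin d))
    (𝓕 : Filtration ℕ m0)
    (hw_adapted : ∀ m, StronglyAdapted 𝓕 (w m))
    (hwc_adapted : ∀ i, StronglyAdapted 𝓕 (wc i))
    (hg_meas : ∀ m t, Measurable (g m t))
    (hg_sq : ∀ m t, MemLp (g m t) 2 μ)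
    (hw_sq : ∀ m t, MemLp (w m t) 2 μ)
    (hwc_sq : ∀ i t, MemLp (wc i t) 2 μ)
    -- conditionally unbiased stochastic gradients with bounded variance
    (hg_mean : ∀ m t, μ[g m t | 𝓕 t] =ᵐ[μ] fun ω => gradient (Ft m) (w m t ω))
    (hg_var : ∀ m t, ∫ ω, ‖g m t ω - gradient (Ft m) (w m t ω)‖ ^ 2 ∂μ ≤ σM ^ 2)
    -- update rules (all users participate in every aggregation)
    (hreset_w : ∀ m t, κ₁ ∣ t → w m t = wc (c m) t)
    (hstep_w : ∀ m t, ¬ κ₁ ∣ (t + 1) →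
        ∀ ω, w m (t + 1) ω = w m t ω - η • g m t ω)
    (hstep_wc : ∀ i t, ∀ ω, wc i (t + 1) ω =
        wc i t ω - η • ∑ m ∈ univ.filter (fun m => c m = i), βc m • g m t ω) :
    (1 / (T : ℝ)) * ∑ t ∈ Finset.range T,
        ∑ m, β m * ∫ ω, ‖w m t ω - wc (c m) t ω‖ ^ 2 ∂μ ≤
      (2 * η ^ 2 * κ₁ / (1 - 12 * η ^ 2 * L ^ 2 * (κ₁ : ℝ) ^ 2)) *
        (3 * (κ₁ : ℝ) * εMc ^ 2 + σM ^ 2 * ∑ m, β m * (1 - βc m)) := by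
  have hκ' : (0 : ℝ) < κ₁ := by exact_mod_cast hκ₁
  have hT' : (0 : ℝ) < T := by exact_mod_cast hT
  have hp0 : ∀ m, 0 ≤ βc m := fun m => (hβc01 m).1
  have hLn : (L.toNNReal : ℝ) = L := Real.coe_toNNReal L hL.le
  have hden : 0 < 1 - 12 * η ^ 2 * L ^ 2 * (κ₁ : ℝ) ^ 2 := by
    have h12 : (0 : ℝ) < Real.sqrt 12 := by positivity
    have hpos : 0 < Real.sqrt 12 * L * κ₁ := by positivity
    rw [lt_div_iff₀ hpos] at hηκ
    have h0 : 0 ≤ η * (Real.sqrt 12 * L * κ₁) := by positivity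
    have h1 : (η * (Real.sqrt 12 * L * κ₁)) ^ 2 < 1 := by nlinarith
    have h2 : (Real.sqrt 12) ^ 2 = 12 := Real.sq_sqrt (by norm_num)
    have h3 : (η * (Real.sqrt 12 * L * κ₁)) ^ 2 =
        (Real.sqrt 12) ^ 2 * η ^ 2 * L ^ 2 * (κ₁ : ℝ) ^ 2 := by ring
    rw [h3, h2] at h1
    linarith
  set A : Fin N → ℕ → ℝ := fun i t => ∑ m ∈ univ.filter (fun m => c m = i),
    βc m * ∫ ω, ‖w m t ω - wc i t ω‖ ^ 2 ∂μ with hA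
  have hhL : ∀ m t, MemLp (fun ω => gradient (Ft m) (w m t ω)) 2 μ := by
    intro m t
    have h1 : LipschitzWith L.toNNReal (fun x => gradient (Ft m) x - gradient (Ft m) 0) := by
      have := (hLip m).sub (LipschitzWith.const (gradient (Ft m) 0))
      simpa using this
    have h2 := h1.comp_memLp (by simp) (hw_sq m t)
    have h3 := h2.add (memLp_const (gradient (Ft m) 0) (μ := μ) (p := 2))
    refine h3.ae_eq (Filter.Eventually.of_forall fun ω => ?_)
    simp
  have hcluster : ∀ i, (1 - 12 * η ^ 2 * L ^ 2 * (κ₁ : ℝ) ^ 2) * ∑ t ∈ range T, A i t ≤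
      T * (η ^ 2 * κ₁ * (6 * κ₁ * εMc ^ 2 +
        2 * σM ^ 2 * ∑ m ∈ univ.filter (fun m => c m = i), βc m * (1 - βc m))) := by
    intro i
    refine macfl_real_total (A i) κ₁ hκ₁ (η ^ 2) _ (L ^ 2) (εMc ^ 2) (by positivity) ?_
      (by positivity) (by positivity) ?_ ?_ ?_ T
    · refine mul_nonneg (by positivity) (sum_nonneg fun m _ => mul_nonneg (hp0 m) ?_)
      linarith [(hβc01 m).2]
    · exact fun t => sum_nonneg fun m _ => mul_nonneg (hp0 m)
        (integral_nonneg fun ω => by positivity)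
    · intro t ht
      refine sum_eq_zero fun m hm => ?_
      have hm' : c m = i := (mem_filter.1 hm).2
      rw [hreset_w m t ht, hm']
      simp
    · intro t ht α hα
      have hstep := macfl_one_step (μ := μ) (𝓕.le t) (univ.filter (fun m => c m = i)) βc hp0
        (fun m => (hβc01 m).2) (hβcsum i) (fun m ω => w m t ω - wc i t ω)
        (fun m ω => gradient (Ft m) (w m t ω)) (fun m => g m t)
        (fun m _ => (hw_adapted m t).sub (hwc_adapted i t))
        (fun m => (hLip m).continuous.comp_stronglyMeasurable (hw_adapted m t))
        (fun m _ => (hw_sq m t).sub (hwc_sq i t)) (fun m => hhL m t) (fun m => hg_sq m t)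
        (fun m => hg_mean m t) (σM ^ 2) (L ^ 2) (εMc ^ 2) η (fun m => hg_var m t) ?_ α hα
      · refine le_trans (le_of_eq ?_) hstep
        refine sum_congr rfl fun m _ => ?_
        congr 2
        ext1 ω
        rw [hstep_w m t ht ω, hstep_wc i t ω, smul_sub]
        congr 2
        abel
      · intro ω
        refine (macfl_var_le _ βc (hβcsum i) _ (gradient (fct i) (wc i t ω))).trans ?_
        have h1 : ∀ m, βc m * ‖gradient (Ft m) (w m t ω) - gradient (fct i) (wc i t ω)‖ ^ 2 ≤
            2 * L ^ 2 * (βc m * ‖w m t ω - wc i t ω‖ ^ 2) +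
            2 * (βc m * ‖gradient (Ft m) (wc i t ω) - gradient (fct i) (wc i t ω)‖ ^ 2) := by
          intro m
          have a1 := (hLip m).norm_sub_le (w m t ω) (wc i t ω)
          rw [hLn] at a1
          have a2 := norm_sub_le_norm_sub_add_norm_sub (gradient (Ft m) (w m t ω))
            (gradient (Ft m) (wc i t ω)) (gradient (fct i) (wc i t ω))
          set x := ‖gradient (Ft m) (w m t ω) - gradient (fct i) (wc i t ω)‖
          set y := ‖gradient (Ft m) (wc i t ω) - gradient (fct i) (wc i t ω)‖
          set z := ‖w m t ω - wc i t ω‖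
          have hx : 0 ≤ x := norm_nonneg _
          have h2 : x ≤ L * z + y := by linarith
          have h3 : x ^ 2 ≤ (L * z + y) ^ 2 := by gcongr
          have h4 : x ^ 2 ≤ 2 * L ^ 2 * z ^ 2 + 2 * y ^ 2 := by
            nlinarith [sq_nonneg (L * z - y)]
          have := mul_le_mul_of_nonneg_left h4 (hp0 m)
          linarith
        refine (sum_le_sum fun m _ => h1 m).trans ?_
        rw [sum_add_distrib, ← mul_sum, ← mul_sum]
        have := hdivc i (wc i t ω)
        linarith
  have hsplit : ∀ F : Fin M → ℝ, ∑ m, β m * F m =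
      ∑ i, βC i * ∑ m ∈ univ.filter (fun m => c m = i), βc m * F m := by
    intro F
    rw [← sum_fiberwise univ c]
    refine sum_congr rfl fun i _ => ?_
    rw [mul_sum]
    refine sum_congr rfl fun m hm => ?_
    rw [hβ m, (mem_filter.1 hm).2]; ring
  have hL1 : ∑ t ∈ range T, ∑ m, β m * ∫ ω, ‖w m t ω - wc (c m) t ω‖ ^ 2 ∂μ =
      ∑ i, βC i * ∑ t ∈ range T, A i t := by
    simp only [mul_sum (range T)]
    rw [sum_comm (s := univ) (t := range T)]
    refine sum_congr rfl fun t _ => ?_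
    rw [hsplit]
    refine sum_congr rfl fun i _ => ?_
    congr 1
    refine sum_congr rfl fun m hm => ?_
    rw [(mem_filter.1 hm).2]
  rw [hL1, hsplit]
  set S : Fin N → ℝ := fun i => ∑ m ∈ univ.filter (fun m => c m = i), βc m * (1 - βc m) with hS
  have hmain : (1 - 12 * η ^ 2 * L ^ 2 * (κ₁ : ℝ) ^ 2) * ∑ i, βC i * ∑ t ∈ range T, A i t ≤
      T * (2 * η ^ 2 * κ₁ * (3 * κ₁ * εMc ^ 2 + σM ^ 2 * ∑ i, βC i * S i)) := by
    calc _ = ∑ i, βC i * ((1 - 12 * η ^ 2 * L ^ 2 * (κ₁ : ℝ) ^ 2) * ∑ t ∈ range T, A i t) := by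
          rw [mul_sum]; exact sum_congr rfl fun i _ => by ring
      _ ≤ ∑ i, βC i * (T * (η ^ 2 * κ₁ * (6 * κ₁ * εMc ^ 2 + 2 * σM ^ 2 * S i))) :=
          sum_le_sum fun i _ => mul_le_mul_of_nonneg_left (hcluster i) (hβC01 i).1
      _ = ∑ i, (βC i * (T * (η ^ 2 * κ₁ * (6 * κ₁ * εMc ^ 2))) +
            (T * (η ^ 2 * κ₁ * (2 * σM ^ 2))) * (βC i * S i)) :=
          sum_congr rfl fun i _ => by ring
      _ = _ := by
          rw [sum_add_distrib, ← sum_mul, ← mul_sum, hβCsum]; ring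
  rw [one_div_mul_eq_div, div_le_iff₀ hT', div_mul_eq_mul_div, div_mul_eq_mul_div,
    le_div_iff₀ hden]
  linarith
end
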